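/- arXiv:2203.16623 — 3 statements merged into one kernel-verified Lean document; each statement's English description precedes it below -/
import Mathlib

section
/- Under the push-subgradient algorithm, if the graph sequence {𝔾(t)} is uniformly strongly connected and the subgradients are uniformly bounded (‖g_i(t)‖₂ ≤ G for all i, t), then there exists a constant C > 0, depending on n, L, G, x(0), g(0) and z* but not on T, such that for every integer T ≥ 1 and every agent k ∈ {1,…,n}, running the algorithm with fixed stepsize α(t) = 1/√T for t ∈ {0,1,…,T−1} yields f( (Σ_{τ=0}^{T−1} z_k(τ)) / T ) − f(z*) ≤ C/√T. -/
open Filter Finset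
open scoped InnerProductSpace

/-!
The ratios `z = x / y` follow a linear recursion whose matrices are row stochastic and inherit the
connectivity of `W`, because `y` stays bounded away from `0`. Over a fixed number of steps the
products of these matrices are entrywise bounded below, hence contract the diameter of
`{z_i(t)}` up to an error of the order of the stepsize; so that diameter is small on average.

The average of the `x_i` therefore performs an approximate subgradient step for `f`. Even before
anything is known about the size of the iterates, the averaged gap `f_i(z_i) - f_i(z*)` is bounded
below by a multiple of the diameter, with the Lipschitz constant of the `f_i` near `z*` only. This
confines the iterates to a fixed ball. On that ball the `f_i` are Lipschitz, so each `f_i(z_i)` may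
be replaced by `f_i(z_k)`; telescoping and Jensen's inequality conclude.
-/

section BackwardProducts

/-- The backward product `A (s + m - 1) * ⋯ * A s`, i.e. the transition from time `s` to time
`s + m` of the linear recursion driven by `A`. -/
def backwardProd {M : Type*} [Monoid M] (A : ℕ → M) (s : ℕ) : ℕ → M
  | 0 => 1
  | m + 1 => A (s + m) * backwardProd A s m

lemma backwardProd_mem {M : Type*} [Monoid M] {S : Submonoid M} {A : ℕ → M} (hA : ∀ t, A t ∈ S)
    (s m : ℕ) : backwardProd A s m ∈ S := by
  induction m with
  | zero => exact S.one_mem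
  | succ m ih => exact S.mul_mem (hA _) ih

end BackwardProducts

section Connectivity

variable {ι : Type*} [Fintype ι]

/-- Nonnegative matrices with positive diagonals whose positive entries are at least `β > 0` and
whose graphs (with an arc `j → i` when `0 < W t i j`) are uniformly strongly connected: the union
over any `L` consecutive times is strongly connected. -/
structure IsUniformlyConnected (W : ℕ → Matrix ι ι ℝ) (β : ℝ) (L : ℕ) : Prop where
  nonneg : ∀ t i j, 0 ≤ W t i j
  diag_pos : ∀ t i, 0 < W t i i
  bound_pos : 0 < β
  bound_le : ∀ t i j, 0 < W t i j → β ≤ W t i j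
  window_pos : 0 < L
  connected : ∀ t i j,
    Relation.TransGen (fun u v ↦ ∃ k ∈ Finset.Ico t (t + L), 0 < W k v u) i j

variable [DecidableEq ι] {W : ℕ → Matrix ι ι ℝ} {β : ℝ} {L : ℕ}

lemma backwardProd_apply_nonneg (hW : ∀ t i j, 0 ≤ W t i j) (s m : ℕ) (i j : ι) :
    0 ≤ backwardProd W s m i j := by
  induction m generalizing i with
  | zero => simp only [backwardProd, Matrix.one_apply]; positivity
  | succ m ih => exact Finset.sum_nonneg fun l _ ↦ mul_nonneg (hW _ _ _) (ih l)

/-- The vertices which receive weight at least `β ^ m` from `j` between times `s` and `s + m`. -/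
noncomputable def reachedSet (W : ℕ → Matrix ι ι ℝ) (β : ℝ) (s : ℕ) (j : ι) (m : ℕ) : Finset ι :=
  {i | β ^ m ≤ backwardProd W s m i j}

lemma mem_reachedSet {s m : ℕ} {i j : ι} :
    i ∈ reachedSet W β s j m ↔ β ^ m ≤ backwardProd W s m i j := by
  simp [reachedSet]

namespace IsUniformlyConnected

lemma mem_reachedSet_succ (hW : IsUniformlyConnected W β L) {s m : ℕ} {i j l : ι}
    (hl : l ∈ reachedSet W β s j m) (hil : 0 < W (s + m) i l) :
    i ∈ reachedSet W β s j (m + 1) := by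
  rw [mem_reachedSet] at hl ⊢
  calc β ^ (m + 1) = β * β ^ m := pow_succ' β m
    _ ≤ W (s + m) i l * backwardProd W s m l j :=
      mul_le_mul (hW.bound_le _ _ _ hil) hl (pow_pos hW.bound_pos m).le (hW.nonneg _ _ _)
    _ ≤ ∑ k, W (s + m) i k * backwardProd W s m k j :=
      Finset.single_le_sum (f := fun k ↦ W (s + m) i k * backwardProd W s m k j)
        (fun k _ ↦ mul_nonneg (hW.nonneg _ _ _) (backwardProd_apply_nonneg hW.nonneg s m k j))
        (Finset.mem_univ l)

lemma monotone_reachedSet (hW : IsUniformlyConnected W β L) (s : ℕ) (j : ι) :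
    Monotone (reachedSet W β s j) :=
  monotone_nat_of_le_succ fun _ i hi ↦ hW.mem_reachedSet_succ hi (hW.diag_pos _ i)

lemma self_mem_reachedSet (hW : IsUniformlyConnected W β L) (s : ℕ) (j : ι) (m : ℕ) :
    j ∈ reachedSet W β s j m :=
  hW.monotone_reachedSet s j m.zero_le (mem_reachedSet.2 (by simp [backwardProd]))

-- If the set did not grow over a window, no arc of the window would leave it.
lemma reachedSet_ssubset (hW : IsUniformlyConnected W β L) {s m : ℕ} {j : ι}
    (hm : reachedSet W β s j m ≠ Finset.univ) :
    reachedSet W β s j m ⊂ reachedSet W β s j (m + L) := by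
  refine (hW.monotone_reachedSet s j (m.le_add_right L)).ssubset_of_ne fun heq ↦ hm ?_
  have closed_under_arcs {u v : ι} (hu : u ∈ reachedSet W β s j m)
      (huv : ∃ k ∈ Finset.Ico (s + m) (s + m + L), 0 < W k v u) : v ∈ reachedSet W β s j m := by
    obtain ⟨k, hk, hkuv⟩ := huv
    obtain ⟨hmk, hkL⟩ := Finset.mem_Ico.1 hk
    obtain ⟨r, rfl⟩ : ∃ r, k = s + r := ⟨k - s, by omega⟩
    have hur := hW.monotone_reachedSet s j (by omega : m ≤ r) hu
    exact heq ▸ hW.monotone_reachedSet s j (by omega : r + 1 ≤ m + L)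
      (hW.mem_reachedSet_succ hur hkuv)
  refine Finset.eq_univ_of_forall fun i ↦ ?_
  induction hW.connected (s + m) j i with
  | single hji => exact closed_under_arcs (hW.self_mem_reachedSet s j m) hji
  | tail _ huv ih => exact closed_under_arcs ih huv

lemma reachedSet_eq_univ_or_lt_card (hW : IsUniformlyConnected W β L) (s : ℕ) (j : ι) (k : ℕ) :
    reachedSet W β s j (k * L) = Finset.univ ∨ k < #(reachedSet W β s j (k * L)) := by
  induction k with
  | zero => exact .inr (Finset.card_pos.2 ⟨j, hW.self_mem_reachedSet s j _⟩)
  | succ k ih =>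
    rw [Nat.succ_mul]
    by_cases hk : reachedSet W β s j (k * L) = Finset.univ
    · exact .inl (Finset.univ_subset_iff.1
        (hk ▸ hW.monotone_reachedSet s j (Nat.le_add_right _ L)))
    · exact .inr ((Nat.succ_le_of_lt (ih.resolve_left hk)).trans_lt
        (Finset.card_lt_card (hW.reachedSet_ssubset hk)))

theorem pow_le_backwardProd (hW : IsUniformlyConnected W β L) (s : ℕ) (i j : ι) :
    β ^ (Fintype.card ι * L) ≤ backwardProd W s (Fintype.card ι * L) i j := by
  have huniv := (hW.reachedSet_eq_univ_or_lt_card s j (Fintype.card ι)).resolve_right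
    (Finset.card_le_univ _).not_gt
  exact mem_reachedSet.1 (huniv ▸ Finset.mem_univ i)

lemma pow_le_backwardProd_self (hW : IsUniformlyConnected W β L) (s m : ℕ) (i : ι) :
    β ^ m ≤ backwardProd W s m i i :=
  mem_reachedSet.1 (hW.self_mem_reachedSet s i m)

end IsUniformlyConnected

end Connectivity

section DelayedContraction

variable {V : ℕ → ℝ} {w : ℕ} {ε c D : ℝ}

lemma mul_sum_range_le_of_contraction (hV : ∀ t, 0 ≤ V t) (hinit : ∀ s < w, V s ≤ D)
    (hrec : ∀ t, V (t + w) ≤ (1 - ε) * V t + c) (T : ℕ) :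
    ε * ∑ t ∈ Finset.range T, V t ≤ w * D + T * c := by
  have hinit_sum : ∑ t ∈ Finset.range w, V t ≤ w * D := by
    simpa using Finset.sum_le_card_nsmul _ _ _ fun s hs ↦ hinit s (Finset.mem_range.1 hs)
  have hrec_sum : ∑ t ∈ Finset.range T, V (w + t) ≤
      (1 - ε) * ∑ t ∈ Finset.range T, V t + T * c := by
    calc ∑ t ∈ Finset.range T, V (w + t)
        ≤ ∑ t ∈ Finset.range T, ((1 - ε) * V t + c) :=
          Finset.sum_le_sum fun t _ ↦ add_comm t w ▸ hrec t
      _ = (1 - ε) * ∑ t ∈ Finset.range T, V t + T * c := by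
          simp [Finset.sum_add_distrib, Finset.mul_sum]
  have hmono : ∑ t ∈ Finset.range T, V t ≤ ∑ t ∈ Finset.range (w + T), V t :=
    Finset.sum_le_sum_of_subset_of_nonneg (Finset.range_mono (by omega)) fun t _ _ ↦ hV t
  rw [Finset.sum_range_add] at hmono
  linarith

lemma le_add_div_of_contraction (hw : 0 < w) (hε : 0 < ε) (hε1 : ε ≤ 1) (hD : 0 ≤ D) (hc : 0 ≤ c)
    (hinit : ∀ s < w, V s ≤ D) (hrec : ∀ t, V (t + w) ≤ (1 - ε) * V t + c) (t : ℕ) :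
    V t ≤ D + c / ε := by
  induction t using Nat.strong_induction_on with
  | _ t ih =>
    rcases lt_or_ge t w with htw | htw
    · exact (hinit t htw).trans (le_add_of_nonneg_right (by positivity))
    · obtain ⟨s, rfl⟩ := Nat.exists_eq_add_of_le' htw
      calc V (s + w) ≤ (1 - ε) * V s + c := hrec s
        _ ≤ (1 - ε) * (D + c / ε) + c := by
          have := sub_nonneg.2 hε1
          gcongr
          exact ih s (by omega)
        _ = D + c / ε - ε * D := by field_simp; ring
        _ ≤ D + c / ε := sub_le_self _ (by positivity)

end DelayedContraction

section RowStochastic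

open Metric Matrix
open scoped Matrix.Module

section DiamRange

variable {ι X : Type*} [PseudoMetricSpace X]

lemma dist_le_diam_range [Finite ι] (v : ι → X) (i j : ι) :
    dist (v i) (v j) ≤ diam (Set.range v) :=
  dist_le_diam_of_mem (Set.finite_range v).isBounded (Set.mem_range_self i) (Set.mem_range_self j)

lemma diam_range_le [Nonempty ι] {v : ι → X} {r : ℝ} (h : ∀ i j, dist (v i) (v j) ≤ r) :
    diam (Set.range v) ≤ r :=
  diam_le_of_forall_dist_le_of_nonempty (Set.range_nonempty v)
    (Set.forall_mem_range.2 fun i ↦ Set.forall_mem_range.2 (h i))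

lemma diam_range_le_add_dist [Fintype ι] [Nonempty ι] (u v : ι → X) :
    diam (Set.range u) ≤ diam (Set.range v) + 2 * dist u v := by
  refine diam_range_le fun i j ↦ ?_
  have hj : dist (v j) (u j) ≤ dist u v := dist_comm (v j) (u j) ▸ dist_le_pi_dist u v j
  linarith [dist_triangle4 (u i) (v i) (v j) (u j), dist_le_pi_dist u v i,
    dist_le_diam_range v i j]

end DiamRange

variable {ι E : Type*} [Fintype ι] [NormedAddCommGroup E] [NormedSpace ℝ E]

lemma dist_sum_smul_le_diam_range {q : ι → ℝ} (hq : q ∈ stdSimplex ℝ ι) (v : ι → E) (k : ι) :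
    dist (v k) (∑ i, q i • v i) ≤ diam (Set.range v) := by
  rw [← convexHull_diam]
  refine dist_le_diam_of_mem (isBounded_convexHull.2 (Set.finite_range v).isBounded)
    (subset_convexHull ℝ _ (Set.mem_range_self k)) ?_
  exact (convex_convexHull ℝ _).sum_mem (fun i _ ↦ hq.1 i) hq.2
    fun i _ ↦ subset_convexHull ℝ _ (Set.mem_range_self i)

-- The double sum is `∑ i, ∑ j, (p i * q j) • (v i - v j)`, whose diagonal vanishes.
lemma dist_sum_smul_le_mul_diam {p q : ι → ℝ} (hp : p ∈ stdSimplex ℝ ι) (hq : q ∈ stdSimplex ℝ ι)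
    (v : ι → E) :
    dist (∑ i, p i • v i) (∑ i, q i • v i) ≤ (1 - p ⬝ᵥ q) * diam (Set.range v) := by
  classical
  have coupling : ∑ i, p i • v i - ∑ j, q j • v j = ∑ i, ∑ j, (p i * q j) • (v i - v j) := by
    simp only [smul_sub, Finset.sum_sub_distrib, ← Finset.sum_smul, ← Finset.mul_sum, hq.2, mul_one]
    rw [Finset.sum_comm (f := fun i j ↦ (p i * q j) • v j)]
    simp only [← Finset.sum_smul, ← Finset.sum_mul, hp.2, one_mul]
  have term_le (i j : ι) : ‖(p i * q j) • (v i - v j)‖ ≤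
      (p i * q j - if i = j then p i * q j else 0) * diam (Set.range v) := by
    rw [norm_smul, Real.norm_of_nonneg (mul_nonneg (hp.1 i) (hq.1 j))]
    split_ifs with hij
    · simp [hij]
    · rw [sub_zero, ← dist_eq_norm]
      exact mul_le_mul_of_nonneg_left (dist_le_diam_range v i j) (mul_nonneg (hp.1 i) (hq.1 j))
  calc dist (∑ i, p i • v i) (∑ i, q i • v i)
      ≤ ∑ i, ∑ j, (p i * q j - if i = j then p i * q j else 0) * diam (Set.range v) := by
        rw [dist_eq_norm, coupling]
        exact (norm_sum_le _ _).trans (Finset.sum_le_sum fun i _ ↦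
          (norm_sum_le _ _).trans (Finset.sum_le_sum fun j _ ↦ term_le i j))
    _ = (1 - p ⬝ᵥ q) * diam (Set.range v) := by
        simp only [← Finset.sum_mul, Finset.sum_sub_distrib, ← Finset.mul_sum, hq.2, mul_one, hp.2,
          Finset.sum_ite_eq, Finset.mem_univ, if_true, dotProduct]

variable [DecidableEq ι]

lemma row_mem_stdSimplex {A : Matrix ι ι ℝ} (hA : A ∈ rowStochastic ℝ ι) (i : ι) :
    A i ∈ stdSimplex ℝ ι :=
  ⟨fun _ ↦ nonneg_of_mem_rowStochastic hA, sum_row_of_mem_rowStochastic hA i⟩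

lemma diam_range_smul_le [Nonempty ι] {A : Matrix ι ι ℝ} (hA : A ∈ rowStochastic ℝ ι) {ε : ℝ}
    (hε : ∀ i j, ε ≤ A i j) (v : ι → E) :
    diam (Set.range (A • v)) ≤ (1 - ε) * diam (Set.range v) := by
  refine diam_range_le fun i j ↦
    (dist_sum_smul_le_mul_diam (row_mem_stdSimplex hA i) (row_mem_stdSimplex hA j) v).trans ?_
  have hoverlap : ε ≤ A i ⬝ᵥ A j :=
    calc ε = ∑ k, A i k * ε := by rw [← Finset.sum_mul, sum_row_of_mem_rowStochastic hA, one_mul]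
      _ ≤ A i ⬝ᵥ A j := Finset.sum_le_sum fun k _ ↦
        mul_le_mul_of_nonneg_left (hε j k) (nonneg_of_mem_rowStochastic hA)
  gcongr

lemma norm_smul_le_of_mem_rowStochastic {A : Matrix ι ι ℝ} (hA : A ∈ rowStochastic ℝ ι)
    (v : ι → E) : ‖A • v‖ ≤ ‖v‖ := by
  refine (pi_norm_le_iff_of_nonneg (norm_nonneg v)).2 fun i ↦ ?_
  calc ‖∑ j, A i j • v j‖ ≤ ∑ j, A i j * ‖v‖ := (norm_sum_le _ _).trans <|
        Finset.sum_le_sum fun j _ ↦ by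
          rw [norm_smul, Real.norm_of_nonneg (nonneg_of_mem_rowStochastic hA)]
          exact mul_le_mul_of_nonneg_left (norm_le_pi_norm v j) (nonneg_of_mem_rowStochastic hA)
    _ = ‖v‖ := by rw [← Finset.sum_mul, sum_row_of_mem_rowStochastic hA, one_mul]

section PerturbedConsensus

variable {P : ℕ → Matrix ι ι ℝ} {z e : ℕ → ι → E} {c : ℝ}

lemma norm_sub_backwardProd_smul_le (hP : ∀ t, P t ∈ rowStochastic ℝ ι)
    (hz : ∀ t, z (t + 1) = P t • (z t - e t)) (he : ∀ t, ‖e t‖ ≤ c) (s m : ℕ) :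
    ‖z (s + m) - backwardProd P s m • z s‖ ≤ m * c := by
  induction m with
  | zero => simp [backwardProd]
  | succ m ih =>
    have hstep : z (s + (m + 1)) - backwardProd P s (m + 1) • z s =
        P (s + m) • ((z (s + m) - backwardProd P s m • z s) - e (s + m)) := by
      rw [← add_assoc, hz, backwardProd, mul_smul, ← smul_sub, sub_right_comm]
    rw [hstep]
    refine (norm_smul_le_of_mem_rowStochastic (hP _) _).trans ((norm_sub_le _ _).trans ?_)
    push_cast
    linarith [he (s + m)]

lemma diam_range_add_le [Nonempty ι] (hP : ∀ t, P t ∈ rowStochastic ℝ ι)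
    (hz : ∀ t, z (t + 1) = P t • (z t - e t)) (he : ∀ t, ‖e t‖ ≤ c) {s m : ℕ} {ε : ℝ}
    (hε : ∀ i j, ε ≤ backwardProd P s m i j) :
    diam (Set.range (z (s + m))) ≤ (1 - ε) * diam (Set.range (z s)) + 2 * m * c := by
  have hdrift := norm_sub_backwardProd_smul_le hP hz he s m
  have hcontract := diam_range_smul_le (backwardProd_mem hP s m) hε (z s)
  rw [← dist_eq_norm] at hdrift
  linarith [diam_range_le_add_dist (z (s + m)) (backwardProd P s m • z s)]

lemma le_one_of_le_backwardProd [Nonempty ι] (hP : ∀ t, P t ∈ rowStochastic ℝ ι) {w : ℕ} {ε : ℝ}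
    (hε : ∀ s i j, ε ≤ backwardProd P s w i j) : ε ≤ 1 :=
  let i : ι := Classical.arbitrary ι
  (hε 0 i i).trans (le_one_of_mem_rowStochastic (backwardProd_mem hP 0 w))

variable [Nonempty ι] {w : ℕ} {ε : ℝ}

lemma diam_range_le_of_lt (hP : ∀ t, P t ∈ rowStochastic ℝ ι)
    (hz : ∀ t, z (t + 1) = P t • (z t - e t)) (he : ∀ t, ‖e t‖ ≤ c) {s : ℕ} (hs : s < w) :
    diam (Set.range (z s)) ≤ diam (Set.range (z 0)) + 2 * w * c := by
  have hc : 0 ≤ c := (norm_nonneg _).trans (he 0)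
  have hgrowth := diam_range_add_le hP hz he (s := 0) (m := s) (ε := 0)
    fun i j ↦ nonneg_of_mem_rowStochastic (backwardProd_mem hP 0 s)
  rw [zero_add, sub_zero, one_mul] at hgrowth
  have hsw : (s : ℝ) ≤ w := by exact_mod_cast hs.le
  exact hgrowth.trans (by gcongr)

lemma diam_range_le_const_mul (hP : ∀ t, P t ∈ rowStochastic ℝ ι)
    (hz : ∀ t, z (t + 1) = P t • (z t - e t)) (he : ∀ t, ‖e t‖ ≤ c) (hw : 0 < w) (hε : 0 < ε)
    (hPε : ∀ s i j, ε ≤ backwardProd P s w i j) (t : ℕ) :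
    diam (Set.range (z t)) ≤ 4 * w ^ 2 / ε * (diam (Set.range (z 0)) + c) := by
  have hc : 0 ≤ c := (norm_nonneg _).trans (he 0)
  have hε1 : ε ≤ 1 := le_one_of_le_backwardProd hP hPε
  have hw1 : (1 : ℝ) ≤ w := by exact_mod_cast hw
  have hV0 : 0 ≤ diam (Set.range (z 0)) := diam_nonneg
  calc diam (Set.range (z t))
      ≤ (diam (Set.range (z 0)) + 2 * w * c) + 2 * w * c / ε :=
        le_add_div_of_contraction hw hε hε1 (by positivity) (by positivity)
          (fun s ↦ diam_range_le_of_lt hP hz he) (fun s ↦ diam_range_add_le hP hz he (hPε s)) t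
    _ ≤ (diam (Set.range (z 0)) + 2 * w * c) / ε + 2 * w * c / ε := by
        gcongr
        exact le_div_self (by positivity) hε hε1
    _ = (diam (Set.range (z 0)) + 4 * w * c) / ε := by ring
    _ ≤ (4 * w ^ 2 * diam (Set.range (z 0)) + 4 * w ^ 2 * c) / ε := by
        gcongr
        · exact le_mul_of_one_le_left hV0 (by nlinarith)
        · exact le_self_pow₀ hw1 two_ne_zero
    _ = 4 * w ^ 2 / ε * (diam (Set.range (z 0)) + c) := by ring

lemma sum_diam_range_le_const_mul (hP : ∀ t, P t ∈ rowStochastic ℝ ι)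
    (hz : ∀ t, z (t + 1) = P t • (z t - e t)) (he : ∀ t, ‖e t‖ ≤ c) (hw : 0 < w) (hε : 0 < ε)
    (hPε : ∀ s i j, ε ≤ backwardProd P s w i j) (T : ℕ) :
    ∑ t ∈ Finset.range T, diam (Set.range (z t)) ≤
      4 * w ^ 2 / ε * (diam (Set.range (z 0)) + (T + 1) * c) := by
  have hc : 0 ≤ c := (norm_nonneg _).trans (he 0)
  have hw1 : (1 : ℝ) ≤ w := by exact_mod_cast hw
  have hww : (w : ℝ) ≤ w ^ 2 := le_self_pow₀ hw1 two_ne_zero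
  have hsum := mul_sum_range_le_of_contraction (fun t ↦ diam_nonneg)
    (fun s ↦ diam_range_le_of_lt (w := w) hP hz he) (fun s ↦ diam_range_add_le hP hz he (hPε s)) T
  calc ∑ t ∈ Finset.range T, diam (Set.range (z t))
      ≤ (w * (diam (Set.range (z 0)) + 2 * w * c) + T * (2 * w * c)) / ε :=
        (le_div_iff₀' hε).2 hsum
    _ ≤ (4 * w ^ 2 * diam (Set.range (z 0)) + 4 * w ^ 2 * c + T * (4 * w ^ 2 * c)) / ε := by
        have hinit : (w : ℝ) * diam (Set.range (z 0)) ≤ 4 * w ^ 2 * diam (Set.range (z 0)) := by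
          gcongr; linarith [sq_nonneg (w : ℝ)]
        have hrate : T * (2 * w * c) ≤ T * (4 * w ^ 2 * c) := by
          gcongr; linarith
        gcongr
        nlinarith [mul_nonneg (sq_nonneg (w : ℝ)) hc]
    _ = 4 * w ^ 2 / ε * (diam (Set.range (z 0)) + (T + 1) * c) := by ring

end PerturbedConsensus

end RowStochastic

section Mean

variable {ι E : Type*} [Fintype ι] [AddCommGroup E] [Module ℝ E]

/-- The uniform average of a finite family of vectors, as a linear map. -/
noncomputable def mean : (ι → E) →ₗ[ℝ] E :=
  (Fintype.card ι : ℝ)⁻¹ • ∑ i, LinearMap.proj i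

lemma mean_apply (v : ι → E) : mean v = (Fintype.card ι : ℝ)⁻¹ • ∑ i, v i := by
  simp [mean]

lemma mean_const [Nonempty ι] (u : E) : mean (fun _ : ι ↦ u) = u := by
  simp [mean_apply, ← Nat.cast_smul_eq_nsmul ℝ, smul_smul]

lemma mean_add_const [Nonempty ι] (v : ι → E) (u : E) : mean (fun i ↦ v i + u) = mean v + u :=
  (map_add mean v fun _ ↦ u).trans (by rw [mean_const])

lemma mean_mono {u v : ι → ℝ} (h : ∀ i, u i ≤ v i) : mean u ≤ mean v := by
  simp only [mean_apply]
  exact smul_le_smul_of_nonneg_left (Finset.sum_le_sum fun i _ ↦ h i) (by positivity)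

lemma convexOn_mean {f : ι → E → ℝ} {s : Set E} (hs : Convex ℝ s)
    (hf : ∀ i, ConvexOn ℝ s (f i)) : ConvexOn ℝ s fun w ↦ mean fun i ↦ f i w := by
  refine ⟨hs, fun u hu v hv b c hb hc hbc ↦ ?_⟩
  rw [← map_smul, ← map_smul, ← map_add]
  exact mean_mono fun i ↦ (hf i).2 hu hv hb hc hbc

lemma norm_mean_le {E : Type*} [NormedAddCommGroup E] [NormedSpace ℝ E] [Nonempty ι]
    (v : ι → E) : ‖mean v‖ ≤ ‖v‖ := by
  calc ‖mean v‖ ≤ mean fun i ↦ ‖v i‖ := by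
        rw [mean_apply, mean_apply, norm_smul, Real.norm_of_nonneg (by positivity), smul_eq_mul]
        gcongr
        exact norm_sum_le _ _
    _ ≤ mean fun _ : ι ↦ ‖v‖ := mean_mono (norm_le_pi_norm v)
    _ = ‖v‖ := mean_const _

lemma inner_mean {E : Type*} [NormedAddCommGroup E] [InnerProductSpace ℝ E] (u : E) (v : ι → E) :
    ⟪u, mean v⟫_ℝ = mean fun i ↦ ⟪u, v i⟫_ℝ := by
  simp only [mean_apply, inner_smul_right, inner_sum, smul_eq_mul]

open Matrix in
open scoped Matrix.Module in
lemma mean_smul_of_mem_colStochastic [DecidableEq ι] {A : Matrix ι ι ℝ}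
    (hA : A ∈ colStochastic ℝ ι) (v : ι → E) : mean (A • v) = mean v := by
  simp only [mean_apply, Module.smul_apply]
  rw [Finset.sum_comm]
  simp only [← Finset.sum_smul, sum_col_of_mem_colStochastic hA, one_smul]

end Mean

lemma sq_mul_le_sq_of_mul_sqrt_le {a b r : ℝ} (ha : 0 ≤ a) (hb : 0 ≤ b) (h : a * √b ≤ r) :
    a ^ 2 * b ≤ r ^ 2 := by
  rw [← Real.sq_sqrt hb, ← mul_pow]
  gcongr

lemma norm_inv_smul_le {ι E : Type*} [Fintype ι] [NormedAddCommGroup E] [NormedSpace ℝ E]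
    {q : ι → ℝ} {u : ι → E} {η c : ℝ} (hη : 0 < η) (hq : ∀ i, η ≤ q i) (hu : ‖u‖ ≤ c) :
    ‖fun i ↦ (q i)⁻¹ • u i‖ ≤ c / η := by
  have hc : 0 ≤ c := (norm_nonneg _).trans hu
  refine (pi_norm_le_iff_of_nonneg (by positivity)).2 fun i ↦ ?_
  have hqi : 0 < q i := hη.trans_le (hq i)
  rw [norm_smul, norm_inv, Real.norm_of_nonneg hqi.le, inv_mul_eq_div]
  exact div_le_div₀ hc ((norm_le_pi_norm u i).trans hu) hη (hq i)

section PushSum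

open Metric Matrix
open scoped Matrix.Module

variable {ι E : Type*} [Fintype ι] [DecidableEq ι]

/-- The push-sum iteration with perturbations `e`: numerators `x` and weights `y` are mixed by the
same matrices, and the estimates are the ratios `z`. -/
structure IsPushSum [AddCommGroup E] [Module ℝ E] (W : ℕ → Matrix ι ι ℝ) (y : ℕ → ι → ℝ)
    (x z e : ℕ → ι → E) : Prop where
  y_zero : y 0 = 1
  y_succ : ∀ t, y (t + 1) = W t *ᵥ y t
  x_succ : ∀ t, x (t + 1) = W t • (x t - e t)
  z_eq : ∀ t i, z t i = (y t i)⁻¹ • x t i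

/-- The matrices which drive the ratios of a push-sum iteration with mixing matrices `W` and
weights `y`. -/
noncomputable def ratioMatrix (W : ℕ → Matrix ι ι ℝ) (y : ℕ → ι → ℝ) (t : ℕ) : Matrix ι ι ℝ :=
  .of fun i j ↦ (y (t + 1) i)⁻¹ * (W t i j * y t j)

lemma eq_backwardProd_mulVec {W : ℕ → Matrix ι ι ℝ} {y : ℕ → ι → ℝ}
    (hy : ∀ t, y (t + 1) = W t *ᵥ y t) (s m : ℕ) : y (s + m) = backwardProd W s m *ᵥ y s := by
  induction m with
  | zero => simp [backwardProd]
  | succ m ih => rw [← add_assoc, hy, ih, mulVec_mulVec, backwardProd]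

namespace IsPushSum

variable [NormedAddCommGroup E] [NormedSpace ℝ E] {W : ℕ → Matrix ι ι ℝ} {y : ℕ → ι → ℝ}
  {x z e : ℕ → ι → E} {β c : ℝ} {L : ℕ}

lemma z_zero (h : IsPushSum W y x z e) : z 0 = x 0 := by
  ext1 i
  simp [h.z_eq, h.y_zero]

lemma sum_y (h : IsPushSum W y x z e) (hW : ∀ t, W t ∈ colStochastic ℝ ι) (t : ℕ) :
    ∑ i, y t i = Fintype.card ι := by
  induction t with
  | zero => simp [h.y_zero]
  | succ t ih => rw [h.y_succ, sum_mulVec_of_mem_colStochastic (hW t), ih]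

lemma y_nonneg (h : IsPushSum W y x z e) (hW : ∀ t, W t ∈ colStochastic ℝ ι) (t : ℕ) (i : ι) :
    0 ≤ y t i := by
  induction t generalizing i with
  | zero => simp [h.y_zero]
  | succ t ih => exact h.y_succ t ▸ nonneg_mulVec_of_mem_colStochastic (hW t) ih i

lemma y_le_card (h : IsPushSum W y x z e) (hW : ∀ t, W t ∈ colStochastic ℝ ι) (t : ℕ) (i : ι) :
    y t i ≤ Fintype.card ι :=
  h.sum_y hW t ▸ Finset.single_le_sum (fun j _ ↦ h.y_nonneg hW t j) (Finset.mem_univ i)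

theorem pow_le_y (h : IsPushSum W y x z e) (hW : ∀ t, W t ∈ colStochastic ℝ ι)
    (hconn : IsUniformlyConnected W β L) (t : ℕ) (i : ι) :
    β ^ (Fintype.card ι * L) ≤ y t i := by
  have hβ := hconn.bound_pos
  have hprod (s m : ℕ) (j : ι) := backwardProd_apply_nonneg hconn.nonneg s m i j
  rcases le_total t (Fintype.card ι * L) with ht | ht
  · have hβ1 : β ≤ 1 :=
      (hconn.bound_le 0 i i (hconn.diag_pos 0 i)).trans (le_one_of_mem_colStochastic (hW 0))
    calc β ^ (Fintype.card ι * L) ≤ β ^ t := pow_le_pow_of_le_one hβ.le hβ1 ht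
      _ ≤ backwardProd W 0 t i i := hconn.pow_le_backwardProd_self 0 t i
      _ ≤ ∑ j, backwardProd W 0 t i j :=
        Finset.single_le_sum (fun j _ ↦ hprod 0 t j) (Finset.mem_univ i)
      _ = y t i := by
        rw [← zero_add t, eq_backwardProd_mulVec h.y_succ, h.y_zero, zero_add]
        simp [mulVec, dotProduct]
  · obtain ⟨s, rfl⟩ := Nat.exists_eq_add_of_le' ht
    have : Nonempty ι := ⟨i⟩
    calc β ^ (Fintype.card ι * L) ≤ β ^ (Fintype.card ι * L) * Fintype.card ι :=
          le_mul_of_one_le_right (by positivity) (by exact_mod_cast Fintype.card_pos)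
      _ = ∑ j, β ^ (Fintype.card ι * L) * y s j := by rw [← Finset.mul_sum, h.sum_y hW]
      _ ≤ ∑ j, backwardProd W s (Fintype.card ι * L) i j * y s j :=
        Finset.sum_le_sum fun j _ ↦
          mul_le_mul_of_nonneg_right (hconn.pow_le_backwardProd s i j) (h.y_nonneg hW s j)
      _ = y (s + Fintype.card ι * L) i := by rw [eq_backwardProd_mulVec h.y_succ]; rfl

lemma y_pos (h : IsPushSum W y x z e) (hW : ∀ t, W t ∈ colStochastic ℝ ι)
    (hconn : IsUniformlyConnected W β L) (t : ℕ) (i : ι) : 0 < y t i :=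
  (pow_pos hconn.bound_pos _).trans_le (h.pow_le_y hW hconn t i)

lemma ratioMatrix_mem_rowStochastic (h : IsPushSum W y x z e)
    (hW : ∀ t, W t ∈ colStochastic ℝ ι) (hconn : IsUniformlyConnected W β L) (t : ℕ) :
    ratioMatrix W y t ∈ rowStochastic ℝ ι := by
  refine mem_rowStochastic_iff_sum.2 ⟨fun i j ↦ ?_, fun i ↦ ?_⟩
  · exact mul_nonneg (inv_nonneg.2 (h.y_nonneg hW _ i))
      (mul_nonneg (hconn.nonneg t i j) (h.y_nonneg hW t j))
  · have hsum : ∑ j, W t i j * y t j = y (t + 1) i := by rw [h.y_succ]; rfl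
    simp only [ratioMatrix, of_apply, ← Finset.mul_sum, hsum]
    exact inv_mul_cancel₀ (h.y_pos hW hconn _ i).ne'

lemma isUniformlyConnected_ratioMatrix [Nonempty ι] (h : IsPushSum W y x z e)
    (hW : ∀ t, W t ∈ colStochastic ℝ ι) (hconn : IsUniformlyConnected W β L) :
    IsUniformlyConnected (ratioMatrix W y)
      ((Fintype.card ι : ℝ)⁻¹ * (β * β ^ (Fintype.card ι * L))) L := by
  have hβ := hconn.bound_pos
  have hy := h.y_pos hW hconn
  have pos_iff (t : ℕ) (i j : ι) : 0 < ratioMatrix W y t i j ↔ 0 < W t i j := by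
    simp only [ratioMatrix, of_apply, mul_pos_iff_of_pos_left (inv_pos.2 (hy (t + 1) i)),
      mul_pos_iff_of_pos_right (hy t j)]
  exact
    { nonneg := fun t i j ↦ nonneg_of_mem_rowStochastic (h.ratioMatrix_mem_rowStochastic hW hconn t)
      diag_pos := fun t i ↦ (pos_iff t i i).2 (hconn.diag_pos t i)
      bound_pos := by positivity
      bound_le := fun t i j hij ↦ by
        have hWij := hconn.bound_le t i j ((pos_iff t i j).1 hij)
        exact mul_le_mul (inv_anti₀ (hy _ i) (h.y_le_card hW _ i))
          (mul_le_mul hWij (h.pow_le_y hW hconn t j) (by positivity) (hconn.nonneg t i j))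
          (by positivity) (inv_nonneg.2 (hy _ i).le)
      window_pos := hconn.window_pos
      connected := by simpa only [pos_iff] using hconn.connected }

lemma z_succ (h : IsPushSum W y x z e) (hy : ∀ t i, 0 < y t i) (t : ℕ) :
    z (t + 1) = ratioMatrix W y t • (z t - fun i ↦ (y t i)⁻¹ • e t i) := by
  ext1 i
  rw [h.z_eq, h.x_succ, Module.smul_apply, Module.smul_apply, Finset.smul_sum]
  refine Finset.sum_congr rfl fun j _ ↦ ?_
  simp only [ratioMatrix, of_apply, Pi.sub_apply, h.z_eq, ← smul_sub, smul_smul, mul_assoc,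
    mul_inv_cancel₀ (hy t j).ne', mul_one]

lemma mean_x_succ (h : IsPushSum W y x z e) (hW : ∀ t, W t ∈ colStochastic ℝ ι) (t : ℕ) :
    mean (x (t + 1)) = mean (x t) - mean (e t) := by
  rw [h.x_succ, mean_smul_of_mem_colStochastic (hW t), map_sub]

-- The average of `x` is the convex combination of the ratios with coefficients `y / n`.
lemma dist_mean_x_le_diam_range [Nonempty ι] (h : IsPushSum W y x z e)
    (hW : ∀ t, W t ∈ colStochastic ℝ ι) (hy : ∀ t i, 0 < y t i) (t : ℕ) (k : ι) :
    dist (z t k) (mean (x t)) ≤ diam (Set.range (z t)) := by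
  have hmean : mean (x t) = ∑ i, ((Fintype.card ι : ℝ)⁻¹ * y t i) • z t i := by
    simp only [mean_apply, Finset.smul_sum, h.z_eq, smul_smul, mul_assoc,
      mul_inv_cancel₀ (hy t _).ne', mul_one]
  rw [hmean]
  refine dist_sum_smul_le_diam_range ⟨fun i ↦ ?_, ?_⟩ (z t) k
  · exact mul_nonneg (by positivity) (hy t i).le
  · rw [← Finset.mul_sum, h.sum_y hW, inv_mul_cancel₀ (by positivity)]

end IsPushSum

theorem IsPushSum.exists_diam_range_bound (ι : Type*) [Fintype ι] [DecidableEq ι] [Nonempty ι]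
    [NormedAddCommGroup E] [NormedSpace ℝ E] {β : ℝ} (hβ : 0 < β) (L : ℕ) :
    ∃ K : ℝ, 0 ≤ K ∧ ∀ (W : ℕ → Matrix ι ι ℝ), (∀ t, W t ∈ colStochastic ℝ ι) →
      IsUniformlyConnected W β L → ∀ (y : ℕ → ι → ℝ) (x z e : ℕ → ι → E), IsPushSum W y x z e →
      ∀ c, (∀ t, ‖e t‖ ≤ c) →
      (∀ t, diam (Set.range (z t)) ≤ K * (diam (Set.range (x 0)) + c)) ∧
      ∀ T : ℕ, ∑ t ∈ Finset.range T, diam (Set.range (z t)) ≤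
        K * (diam (Set.range (x 0)) + (T + 1) * c) := by
  set w := Fintype.card ι * L
  set η := β ^ w
  set ε := ((Fintype.card ι : ℝ)⁻¹ * (β * η)) ^ w
  have hη : 0 < η := pow_pos hβ w
  have hε : 0 < ε := by positivity
  refine ⟨4 * w ^ 2 / ε / η, by positivity, fun W hW hconn y x z e h c he ↦ ?_⟩
  have hη1 : η ≤ 1 := by
    have := h.pow_le_y hW hconn 0 (Classical.arbitrary ι)
    rwa [h.y_zero] at this
  have hP := h.ratioMatrix_mem_rowStochastic hW hconn
  have hPε := (h.isUniformlyConnected_ratioMatrix hW hconn).pow_le_backwardProd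
  have hz := h.z_succ (h.y_pos hW hconn)
  have he' (t : ℕ) := norm_inv_smul_le hη (h.pow_le_y hW hconn t) (he t)
  have hw0 : 0 < w := Nat.mul_pos Fintype.card_pos hconn.window_pos
  have hV0 : diam (Set.range (x 0)) ≤ diam (Set.range (x 0)) / η := le_div_self diam_nonneg hη hη1
  constructor
  · intro t
    calc diam (Set.range (z t)) ≤ 4 * w ^ 2 / ε * (diam (Set.range (x 0)) + c / η) :=
          h.z_zero ▸ diam_range_le_const_mul hP hz he' hw0 hε hPε t
      _ ≤ 4 * w ^ 2 / ε * (diam (Set.range (x 0)) / η + c / η) := by gcongr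
      _ = _ := by ring
  · intro T
    calc ∑ t ∈ Finset.range T, diam (Set.range (z t))
        ≤ 4 * w ^ 2 / ε * (diam (Set.range (x 0)) + (T + 1) * (c / η)) :=
          h.z_zero ▸ sum_diam_range_le_const_mul hP hz he' hw0 hε hPε T
      _ ≤ 4 * w ^ 2 / ε * (diam (Set.range (x 0)) / η + (T + 1) * (c / η)) := by gcongr
      _ = _ := by ring

theorem IsPushSum.exists_diam_range_bound_of_smul (ι : Type*) [Fintype ι] [DecidableEq ι]
    [Nonempty ι] [NormedAddCommGroup E] [NormedSpace ℝ E] {β : ℝ} (hβ : 0 < β) (L : ℕ) :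
    ∃ K : ℝ, ∀ W : ℕ → Matrix ι ι ℝ, (∀ t, W t ∈ colStochastic ℝ ι) →
      IsUniformlyConnected W β L → ∀ (a : ℝ) (y : ℕ → ι → ℝ) (x z g : ℕ → ι → E),
      IsPushSum W y x z (fun t ↦ a • g t) → 0 ≤ a → ∀ {G r : ℝ}, (∀ t, ‖g t‖ ≤ G) →
      ∀ T : ℕ, 1 ≤ T → a * √T ≤ r →
      (∀ t, diam (Set.range (z t)) ≤ K * (diam (Set.range (x 0)) + r * G)) ∧
      a * ∑ t ∈ Finset.range T, diam (Set.range (z t)) ≤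
        K * (r * diam (Set.range (x 0)) + 2 * r ^ 2 * G) := by
  obtain ⟨K, hK, hbound⟩ := exists_diam_range_bound (E := E) ι hβ L
  refine ⟨K, fun W hW hconn a y x z g h ha G r hg T hT har ↦ ?_⟩
  have hG : 0 ≤ G := (norm_nonneg _).trans (hg 0)
  have hT1 : (1 : ℝ) ≤ T := by exact_mod_cast hT
  have ha_le : a ≤ r := (le_mul_of_one_le_right ha (Real.one_le_sqrt.2 hT1)).trans har
  have hsq := sq_mul_le_sq_of_mul_sqrt_le ha T.cast_nonneg har
  have he (t : ℕ) : ‖a • g t‖ ≤ a * G := by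
    rw [norm_smul, Real.norm_of_nonneg ha]
    gcongr
    exact hg t
  obtain ⟨hV, hsum⟩ := hbound W hW hconn y x z _ h (a * G) he
  refine ⟨fun t ↦ (hV t).trans (by gcongr), ?_⟩
  calc a * ∑ t ∈ Finset.range T, diam (Set.range (z t))
      ≤ a * (K * (diam (Set.range (x 0)) + (T + 1) * (a * G))) := by gcongr; exact hsum T
    _ = K * (a * diam (Set.range (x 0)) + (a ^ 2 * T + a ^ 2 * 1) * G) := by ring
    _ ≤ K * (r * diam (Set.range (x 0)) + (a ^ 2 * T + a ^ 2 * T) * G) := by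
      gcongr
    _ = K * (r * diam (Set.range (x 0)) + 2 * (a ^ 2 * T) * G) := by ring
    _ ≤ K * (r * diam (Set.range (x 0)) + 2 * r ^ 2 * G) := by gcongr

end PushSum

section ConvexMean

variable {ι E : Type*} [Fintype ι] [NormedAddCommGroup E]

lemma exists_lipschitzOnWith_of_convexOn {ι : Type*} [Finite ι] [NormedSpace ℝ E]
    [FiniteDimensional ℝ E] {f : ι → E → ℝ} (hf : ∀ i, ConvexOn ℝ Set.univ (f i))
    {U : Set E} (hU : IsCompact U) : ∃ K : NNReal, ∀ i, LipschitzOnWith K (f i) U := by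
  cases nonempty_fintype ι
  choose K hK using fun i ↦
    ((hf i).locallyLipschitz.locallyLipschitzOn (s := U)).exists_lipschitzOnWith_of_compact hU
  exact ⟨∑ i, K i, fun i ↦ (hK i).weaken
    (Finset.single_le_sum (f := K) (fun _ _ ↦ zero_le) (Finset.mem_univ i))⟩

-- Shrinking `v` and `p` towards `s` brings them into the region where the Lipschitz bound holds,
-- and convexity scales the conclusion back.
lemma neg_mul_le_mean_sub_of_isMin [Nonempty ι] [NormedSpace ℝ E] {f : ι → E → ℝ}
    (hf : ∀ i, ConvexOn ℝ Set.univ (f i)) {s : E}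
    (hs : ∀ w, mean (fun i ↦ f i s) ≤ mean fun i ↦ f i w) {U : Set E} (hU : U ∈ nhds s)
    {K : NNReal} (hK : ∀ i, LipschitzOnWith K (f i) U) {v : ι → E} {p : E} {δ : ℝ}
    (hv : ∀ i, dist (v i) p ≤ δ) :
    -(K * δ) ≤ mean fun i ↦ f i (v i) - f i s := by
  have eventually_shrink_mem (u : E) :
      ∀ᶠ θ : ℝ in nhdsWithin 0 (Set.Ioi 0), s + θ • (u - s) ∈ U := by
    have hcont : Continuous fun θ : ℝ ↦ s + θ • (u - s) := by fun_prop
    exact nhdsWithin_le_nhds (hcont.continuousAt.preimage_mem_nhds (by simpa using hU))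
  obtain ⟨θ, ⟨hθ0, hθ1⟩, hvU, hpU⟩ := ((eventually_mem_set.2 (Ioo_mem_nhdsGT (zero_lt_one' ℝ))).and
    ((eventually_all.2 fun i ↦ eventually_shrink_mem (v i)).and (eventually_shrink_mem p))).exists
  have gap_le (i : ι) : f i (s + θ • (p - s)) - f i s ≤ θ * (f i (v i) - f i s + K * δ) := by
    have hconv := (hf i).2 (Set.mem_univ (v i)) (Set.mem_univ s) hθ0.le (sub_nonneg.2 hθ1.le)
      (add_sub_cancel _ _)
    have hlip := (le_abs_self _).trans ((hK i).dist_le_mul _ hpU _ (hvU i))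
    rw [dist_add_left, dist_smul₀, dist_sub_right, dist_comm, Real.norm_of_nonneg hθ0.le] at hlip
    rw [show θ • v i + (1 - θ) • s = s + θ • (v i - s) by module, smul_eq_mul, smul_eq_mul]
      at hconv
    have hδ : (K : ℝ) * (θ * dist (v i) p) ≤ K * (θ * δ) := by gcongr; exact hv i
    linarith
  have hmean : 0 ≤ θ * (mean (fun i ↦ f i (v i) - f i s) + K * δ) :=
    calc (0 : ℝ) ≤ mean (fun i ↦ f i (s + θ • (p - s))) - mean fun i ↦ f i s := sub_nonneg.2 (hs _)
      _ ≤ mean fun i ↦ θ * (f i (v i) - f i s + K * δ) := by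
        rw [← map_sub]; exact mean_mono gap_le
      _ = θ * (mean (fun i ↦ f i (v i) - f i s) + K * δ) := by
        rw [← mean_add_const]; exact map_smul mean θ _
  linarith [nonneg_of_mul_nonneg_right hmean hθ0]

lemma mean_sub_mul_le_mean_sub {X : Type*} [PseudoMetricSpace X] [Nonempty ι] {f : ι → X → ℝ}
    {U : Set X} {K : NNReal} (hK : ∀ i, LipschitzOnWith K (f i) U) {z : ι → X}
    (hz : ∀ i, z i ∈ U) (s : X) (k : ι) :
    mean (fun i ↦ f i (z k)) - mean (fun i ↦ f i s) - K * Metric.diam (Set.range z) ≤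
      mean fun i ↦ f i (z i) - f i s := by
  rw [sub_le_iff_le_add, ← map_sub, ← mean_add_const]
  refine mean_mono fun i ↦ ?_
  have hlip := (le_abs_self _).trans ((hK i).dist_le_mul _ (hz k) _ (hz i))
  have hdiam : (K : ℝ) * dist (z k) (z i) ≤ K * Metric.diam (Set.range z) := by
    gcongr
    exact dist_le_diam_range z k i
  simp only [Pi.sub_apply]
  linarith

lemma norm_sub_smul_mean_sub_sq_le [Nonempty ι] [InnerProductSpace ℝ E] {z g : ι → E} {p s : E}
    {q : ι → ℝ} {a G δ : ℝ} (ha : 0 ≤ a) (hg : ‖g‖ ≤ G) (hz : ∀ i, dist (z i) p ≤ δ)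
    (hq : ∀ i, q i ≤ ⟪z i - s, g i⟫_ℝ) :
    ‖p - a • mean g - s‖ ^ 2 + 2 * a * mean q ≤ ‖p - s‖ ^ 2 + a ^ 2 * G ^ 2 + 2 * a * G * δ := by
  have hinner : mean q ≤ ⟪p - s, mean g⟫_ℝ + G * δ := by
    rw [inner_mean, ← mean_add_const]
    refine mean_mono fun i ↦ ?_
    have hcs : ⟪z i - p, g i⟫_ℝ ≤ δ * G := (real_inner_le_norm _ _).trans <|
      mul_le_mul (dist_eq_norm (z i) p ▸ hz i) ((norm_le_pi_norm g i).trans hg) (norm_nonneg _)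
        (dist_nonneg.trans (hz i))
    have hsplit : ⟪z i - s, g i⟫_ℝ = ⟪z i - p, g i⟫_ℝ + ⟪p - s, g i⟫_ℝ := by
      rw [← inner_add_left, sub_add_sub_cancel]
    linarith [hq i]
  have hsq : ‖mean g‖ ^ 2 ≤ G ^ 2 := by
    gcongr
    exact (norm_mean_le g).trans hg
  have hexpand : ‖p - a • mean g - s‖ ^ 2 =
      ‖p - s‖ ^ 2 - 2 * (a * ⟪p - s, mean g⟫_ℝ) + a ^ 2 * ‖mean g‖ ^ 2 := by
    rw [sub_right_comm, norm_sub_sq_real, inner_smul_right, norm_smul, mul_pow, Real.norm_eq_abs,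
      sq_abs]
  rw [hexpand]
  linarith [mul_le_mul_of_nonneg_left hinner ha, mul_le_mul_of_nonneg_left hsq (sq_nonneg a)]

end ConvexMean

section PushSubgradient

open Metric Matrix

variable {ι E : Type*} [Fintype ι] [DecidableEq ι] [NormedAddCommGroup E] [InnerProductSpace ℝ E]

/-- A run of the push-subgradient algorithm with fixed stepsize `a`: the push-sum iteration
perturbed by `a • g`, where `g t j` is a subgradient of `f j` at the ratio `z t j`. -/
structure IsPushSubgradient (W : ℕ → Matrix ι ι ℝ) (f : ι → E → ℝ) (a : ℝ) (y : ℕ → ι → ℝ)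
    (x z g : ℕ → ι → E) : Prop extends IsPushSum W y x z fun t ↦ a • g t where
  subgradient : ∀ t j w, f j (z t j) + ⟪g t j, w - z t j⟫_ℝ ≤ f j w

namespace IsPushSubgradient

variable [Nonempty ι] {W : ℕ → Matrix ι ι ℝ} {f : ι → E → ℝ} {y : ℕ → ι → ℝ} {x z g : ℕ → ι → E}
  {s : E} {U : Set E} {K : NNReal} {a r G D B : ℝ}

lemma norm_mean_x_sub_sq_add_le (h : IsPushSubgradient W f a y x z g)
    (hW : ∀ t, W t ∈ colStochastic ℝ ι) (hy : ∀ t i, 0 < y t i) (ha : 0 ≤ a)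
    (hg : ∀ t, ‖g t‖ ≤ G) {q : ℕ → ℝ} {T : ℕ} {κ : ℝ}
    (hq : ∀ t < T, q t - κ * diam (Set.range (z t)) ≤ mean fun j ↦ f j (z t j) - f j s) :
    ‖mean (x T) - s‖ ^ 2 + 2 * a * ∑ t ∈ Finset.range T, q t ≤
      ‖mean (x 0) - s‖ ^ 2 + a ^ 2 * T * G ^ 2 +
        2 * (G + κ) * (a * ∑ t ∈ Finset.range T, diam (Set.range (z t))) := by
  induction T with
  | zero => simp
  | succ T ih =>
    have hgap (j : ι) : f j (z T j) - f j s ≤ ⟪z T j - s, g T j⟫_ℝ := by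
      have := h.subgradient T j s
      rw [← neg_sub (z T j), inner_neg_right, real_inner_comm] at this
      linarith
    have hdescent := norm_sub_smul_mean_sub_sq_le ha (hg T)
      (h.dist_mean_x_le_diam_range hW hy T) hgap
    rw [← map_smul, ← h.mean_x_succ hW T] at hdescent
    have hqT := mul_le_mul_of_nonneg_left (hq T T.lt_succ_self) ha
    have := ih fun t ht ↦ hq t (ht.trans T.lt_succ_self)
    simp only [Finset.sum_range_succ, Nat.cast_succ]
    linarith

lemma norm_mean_x_sub_sq_add_le_const (h : IsPushSubgradient W f a y x z g)
    (hW : ∀ t, W t ∈ colStochastic ℝ ι) (hy : ∀ t i, 0 < y t i) (ha : 0 ≤ a)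
    (hg : ∀ t, ‖g t‖ ≤ G) {q : ℕ → ℝ} {T : ℕ}
    (hq : ∀ t < T, q t - K * diam (Set.range (z t)) ≤ mean fun j ↦ f j (z t j) - f j s)
    (hr : a ^ 2 * T ≤ r ^ 2) (hD : a * ∑ t ∈ Finset.range T, diam (Set.range (z t)) ≤ D) :
    ‖mean (x T) - s‖ ^ 2 + 2 * a * ∑ t ∈ Finset.range T, q t ≤
      ‖mean (x 0) - s‖ ^ 2 + r ^ 2 * G ^ 2 + 2 * (G + K) * D := by
  have hG : 0 ≤ G := (norm_nonneg _).trans (hg 0)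
  refine (h.norm_mean_x_sub_sq_add_le hW hy ha hg hq).trans ?_
  gcongr

lemma z_mem_closedBall (h : IsPushSubgradient W f a y x z g)
    (hW : ∀ t, W t ∈ colStochastic ℝ ι) (hy : ∀ t i, 0 < y t i) (ha : 0 ≤ a)
    (hg : ∀ t, ‖g t‖ ≤ G) (hf : ∀ i, ConvexOn ℝ Set.univ (f i))
    (hs : ∀ w, mean (fun i ↦ f i s) ≤ mean fun i ↦ f i w) (hU : U ∈ nhds s)
    (hK : ∀ i, LipschitzOnWith K (f i) U) {T : ℕ} (hr : a ^ 2 * T ≤ r ^ 2)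
    (hD : a * ∑ t ∈ Finset.range T, diam (Set.range (z t)) ≤ D)
    (hB : diam (Set.range (z T)) ≤ B) (k : ι) :
    z T k ∈ closedBall s
      (B + √(‖mean (x 0) - s‖ ^ 2 + r ^ 2 * G ^ 2 + 2 * (G + K) * D)) := by
  have hlower (t : ℕ) (_ : t < T) :
      0 - K * diam (Set.range (z t)) ≤ mean fun j ↦ f j (z t j) - f j s := by
    rw [zero_sub]
    exact neg_mul_le_mean_sub_of_isMin hf hs hU hK (h.dist_mean_x_le_diam_range hW hy t)
  have hsq := h.norm_mean_x_sub_sq_add_le_const hW hy ha hg hlower hr hD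
  rw [Finset.sum_const_zero, mul_zero, add_zero] at hsq
  calc dist (z T k) s ≤ dist (z T k) (mean (x T)) + dist (mean (x T)) s := dist_triangle _ _ _
    _ ≤ B + √(‖mean (x 0) - s‖ ^ 2 + r ^ 2 * G ^ 2 + 2 * (G + K) * D) := by
      rw [dist_eq_norm (mean (x T))]
      exact add_le_add ((h.dist_mean_x_le_diam_range hW hy T k).trans hB)
        (Real.le_sqrt_of_sq_le hsq)

lemma mean_average_sub_le (h : IsPushSubgradient W f a y x z g)
    (hW : ∀ t, W t ∈ colStochastic ℝ ι) (hy : ∀ t i, 0 < y t i) (ha : 0 < a)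
    (hg : ∀ t, ‖g t‖ ≤ G) (hf : ∀ i, ConvexOn ℝ Set.univ (f i))
    (hK : ∀ i, LipschitzOnWith K (f i) U) {T : ℕ} (hT : 0 < T) (hz : ∀ t < T, ∀ i, z t i ∈ U)
    (hr : a ^ 2 * T ≤ r ^ 2) (hD : a * ∑ t ∈ Finset.range T, diam (Set.range (z t)) ≤ D) (k : ι) :
    mean (fun i ↦ f i ((T : ℝ)⁻¹ • ∑ t ∈ Finset.range T, z t k)) - mean (fun i ↦ f i s) ≤
      (‖mean (x 0) - s‖ ^ 2 + r ^ 2 * G ^ 2 + 2 * (G + K) * D) / (2 * (a * T)) := by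
  have hT' : (0 : ℝ) < T := by exact_mod_cast hT
  have hregret := h.norm_mean_x_sub_sq_add_le_const hW hy ha.le hg
    (fun t ht ↦ mean_sub_mul_le_mean_sub hK (hz t ht) s k) hr hD
  have hjensen := (convexOn_mean convex_univ hf).map_sum_le (t := Finset.range T)
    (w := fun _ ↦ (T : ℝ)⁻¹) (p := fun t ↦ z t k) (fun _ _ ↦ by positivity)
    (by simp [hT'.ne']) (fun _ _ ↦ Set.mem_univ _)
  rw [← Finset.smul_sum, ← Finset.smul_sum] at hjensen
  rw [Finset.sum_sub_distrib, Finset.sum_const, Finset.card_range, nsmul_eq_mul] at hregret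
  rw [le_div_iff₀ (by positivity)]
  calc _ ≤ ((T : ℝ)⁻¹ • ∑ t ∈ Finset.range T, mean (fun i ↦ f i (z t k)) - mean fun i ↦ f i s) *
        (2 * (a * T)) := by gcongr
    _ = 2 * a * (∑ t ∈ Finset.range T, mean (fun i ↦ f i (z t k)) - T * mean fun i ↦ f i s) := by
      rw [smul_eq_mul]; field_simp
    _ ≤ _ := by linarith [sq_nonneg ‖mean (x T) - s‖]

end IsPushSubgradient

theorem stmt_7_general [Nonempty ι] [FiniteDimensional ℝ E] {β : ℝ} (hβ : 0 < β) (L : ℕ)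
    {f : ι → E → ℝ} (hf : ∀ i, ConvexOn ℝ Set.univ (f i)) {s : E}
    (hs : ∀ w, mean (fun i ↦ f i s) ≤ mean fun i ↦ f i w) (x₀ : ι → E) (G r : ℝ) :
    ∃ C : ℝ, 0 < C ∧ ∀ W : ℕ → Matrix ι ι ℝ, (∀ t, W t ∈ colStochastic ℝ ι) →
      IsUniformlyConnected W β L → ∀ (a : ℝ) (y : ℕ → ι → ℝ) (x z g : ℕ → ι → E),
      IsPushSubgradient W f a y x z g → x 0 = x₀ → (∀ t, ‖g t‖ ≤ G) →
      ∀ T : ℕ, 1 ≤ T → 0 < a → a * √T ≤ r → ∀ k,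
        mean (fun i ↦ f i ((T : ℝ)⁻¹ • ∑ τ ∈ Finset.range T, z τ k)) - mean (fun i ↦ f i s) ≤
          C / (a * T) := by
  obtain ⟨K₀, hspread⟩ := IsPushSum.exists_diam_range_bound_of_smul (E := E) ι hβ L
  set B := K₀ * (diam (Set.range x₀) + r * G)
  set D := K₀ * (r * diam (Set.range x₀) + 2 * r ^ 2 * G)
  -- `K₁` confines the iterates to the ball of radius `R`, where `K₂` then controls the regret.
  obtain ⟨K₁, hK₁⟩ := exists_lipschitzOnWith_of_convexOn hf (isCompact_closedBall s 1)
  set R := B + √(‖mean x₀ - s‖ ^ 2 + r ^ 2 * G ^ 2 + 2 * (G + K₁) * D)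
  obtain ⟨K₂, hK₂⟩ := exists_lipschitzOnWith_of_convexOn hf (isCompact_closedBall s R)
  refine ⟨max 1 ((‖mean x₀ - s‖ ^ 2 + r ^ 2 * G ^ 2 + 2 * (G + K₂) * D) / 2), by positivity, ?_⟩
  rintro W hW hconn a y x z g h rfl hg T hT ha har k
  have hy := h.y_pos hW hconn
  have hsq := sq_mul_le_sq_of_mul_sqrt_le ha.le T.cast_nonneg har
  obtain ⟨hB, hD⟩ := hspread W hW hconn a y x z g h.toIsPushSum ha.le hg T hT har
  have hball (t : ℕ) (ht : t < T) (i : ι) : z t i ∈ closedBall s R := by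
    refine h.z_mem_closedBall hW hy ha.le hg hf hs (closedBall_mem_nhds s one_pos) hK₁
      (le_trans ?_ hsq) (le_trans ?_ hD) (hB t) i
    · gcongr
    · gcongr
  calc _ ≤ (‖mean (x 0) - s‖ ^ 2 + r ^ 2 * G ^ 2 + 2 * (G + K₂) * D) / (2 * (a * T)) :=
        h.mean_average_sub_le hW hy ha hg hf hK₂ hT hball hsq hD k
    _ ≤ _ := by
        rw [← div_div]
        gcongr
        exact le_max_right _ _

end PushSubgradient

theorem stmt_7
    (n : ℕ) (hn : 0 < n)
    (W : ℕ → Matrix (Fin n) (Fin n) ℝ)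
    (hWnonneg : ∀ t i j, 0 ≤ W t i j)
    (hWcol : ∀ t j, ∑ i, W t i j = 1)
    (hWdiag : ∀ t i, 0 < W t i i)
    (β : ℝ) (hβ : 0 < β)
    (hWβ : ∀ t i j, 0 < W t i j → β ≤ W t i j)
    (L : ℕ) (hL : 0 < L)
    (hUSC : ∀ t : ℕ, ∀ i j : Fin n,
      Relation.TransGen (fun u v : Fin n => ∃ k ∈ Finset.Ico t (t + L), 0 < W k v u) i j)
    (d : ℕ)
    (y : ℕ → Fin n → ℝ)
    (hy0 : ∀ i, y 0 i = 1)
    (hyrec : ∀ t i, y (t + 1) i = ∑ j, W t i j * y t j)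
    (x g : ℕ → ℕ → Fin n → EuclideanSpace ℝ (Fin d))
    (x0 g0 : Fin n → EuclideanSpace ℝ (Fin d))
    (hx0 : ∀ T, x T 0 = x0)
    (hg0 : ∀ T, g T 0 = g0)
    (hxrec : ∀ T : ℕ, 1 ≤ T → ∀ t i,
      x T (t + 1) i = ∑ j, W t i j • (x T t j - (1 / Real.sqrt T) • g T t j))
    (z : ℕ → ℕ → Fin n → EuclideanSpace ℝ (Fin d))
    (hz : ∀ T t i, z T t i = (y t i)⁻¹ • x T t i)
    (G : ℝ) (hG : ∀ T t i, ‖g T t i‖ ≤ G)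
    (f : Fin n → EuclideanSpace ℝ (Fin d) → ℝ)
    (hconv : ∀ i, ConvexOn ℝ Set.univ (f i))
    (F : EuclideanSpace ℝ (Fin d) → ℝ)
    (hF : ∀ w, F w = (n : ℝ)⁻¹ * ∑ i, f i w)
    (zstar : EuclideanSpace ℝ (Fin d))
    (hmin : ∀ w, F zstar ≤ F w)
    (hsub : ∀ T t j w, f j (z T t j) + ⟪g T t j, w - z T t j⟫_ℝ ≤ f j w)
    (zbar : ℕ → ℕ → EuclideanSpace ℝ (Fin d))
    (hzbar : ∀ T t, zbar T t = (n : ℝ)⁻¹ • ∑ i, z T t i)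
    :
    ∃ C : ℝ, 0 < C ∧ ∀ T : ℕ, 1 ≤ T → ∀ k : Fin n,
      F ((T : ℝ)⁻¹ • ∑ τ ∈ Finset.range T, z T τ k) - F zstar ≤ C / Real.sqrt T := by
  have : Nonempty (Fin n) := ⟨⟨0, hn⟩⟩
  have hFmean (w : EuclideanSpace ℝ (Fin d)) : F w = mean fun i ↦ f i w := by
    rw [hF, mean_apply, Fintype.card_fin, smul_eq_mul]
  simp only [hFmean] at hmin ⊢
  have hW (t : ℕ) : W t ∈ Matrix.colStochastic ℝ (Fin n) :=
    Matrix.mem_colStochastic_iff_sum.2 ⟨hWnonneg t, hWcol t⟩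
  have hconn : IsUniformlyConnected W β L := ⟨hWnonneg, hWdiag, hβ, hWβ, hL, hUSC⟩
  have hrun (T : ℕ) (hT : 1 ≤ T) : IsPushSubgradient W f (1 / √T) y (x T) (z T) (g T) :=
    { y_zero := funext hy0
      y_succ := fun t ↦ funext (hyrec t)
      x_succ := fun t ↦ funext (hxrec T hT t)
      z_eq := hz T
      subgradient := hsub T }
  obtain ⟨C, hC, hbound⟩ := stmt_7_general hβ L hconv hmin x0 G 1
  refine ⟨C, hC, fun T hT k ↦ ?_⟩
  have hstep : 1 / √T * (T : ℝ) = √T := by rw [one_div_mul_eq_div, Real.div_sqrt]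
  refine hstep ▸ hbound W hW hconn _ y _ _ _ (hrun T hT) (hx0 T) (fun t ↦ ?_) T hT ?_ ?_ k
  · exact (pi_norm_le_iff_of_nonempty _).2 (hG T t)
  · positivity
  · field_simp; rfl
end

section
/- If the graph sequence {𝔾(t)} of the column stochastic matrix sequence {W(t)} is uniformly strongly connected and y(t) is defined by y(t+1) = W(t) y(t) with y(0) = 𝟙, then there exists a constant η > 0 such that η ≤ y_i(t) ≤ n for all i ∈ {1,…,n} and all t ≥ 0. -/
open Filter Finset
open scoped InnerProductSpace

/-!
Total mass is conserved, so at every time some node carries at least the average initial mass.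
Self-weights at least `β` let a node lose at most a factor `β` per step, and in a window of `L`
steps some arc leaves any proper nonempty set of nodes. Hence the set of nodes carrying at least
`c` gains a node per window, at the price of replacing `c` by `β ^ L * c`, and after `n - 1`
windows it contains every node.
-/

open scoped Matrix

theorem exists_rel_mem_notMem_of_reflTransGen {α : Type*} {r : α → α → Prop} {s : Set α} {a b : α}
    (hab : Relation.ReflTransGen r a b) (ha : a ∈ s) (hb : b ∉ s) :
    ∃ u ∈ s, ∃ v ∉ s, r u v := by
  induction hab with
  | refl => exact absurd ha hb
  | @tail u v _ huv ih =>
    by_cases hu : u ∈ s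
    · exact ⟨u, hu, v, hb, huv⟩
    · exact ih hu

section OrderedSemiring

variable {ι R : Type*} [Fintype ι] [Semiring R] [PartialOrder R] [IsOrderedRing R]

theorem mul_le_mulVec_apply {A : Matrix ι ι R} {x : ι → R} {b : R} {i j : ι}
    (hA : ∀ k, 0 ≤ A i k) (hx : ∀ k, 0 ≤ x k) (hb : b ≤ A i j) :
    b * x j ≤ (A *ᵥ x) i :=
  calc b * x j ≤ A i j * x j := mul_le_mul_of_nonneg_right hb (hx j)
    _ ≤ (A *ᵥ x) i :=
      single_le_sum (f := fun k => A i k * x k) (fun k _ => mul_nonneg (hA k) (hx k)) (mem_univ j)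

variable [DecidableEq ι] {W : ℕ → Matrix ι ι R} {y : ℕ → ι → R}

theorem nonneg_of_forall_mem_colStochastic (hW : ∀ t, W t ∈ Matrix.colStochastic R ι)
    (hy : ∀ t, y (t + 1) = W t *ᵥ y t) (hy0 : ∀ i, 0 ≤ y 0 i) (t : ℕ) : ∀ i, 0 ≤ y t i := by
  induction t with
  | zero => exact hy0
  | succ t ih => simpa only [hy] using Matrix.nonneg_mulVec_of_mem_colStochastic (hW t) ih

theorem sum_eq_sum_zero_of_forall_mem_colStochastic (hW : ∀ t, W t ∈ Matrix.colStochastic R ι)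
    (hy : ∀ t, y (t + 1) = W t *ᵥ y t) (t : ℕ) : ∑ i, y t i = ∑ i, y 0 i := by
  induction t with
  | zero => rfl
  | succ t ih => rw [hy, Matrix.sum_mulVec_of_mem_colStochastic (hW t), ih]

end OrderedSemiring

section OrderedCommSemiring

variable {ι R : Type*} [Fintype ι] [CommSemiring R] [PartialOrder R] [IsOrderedRing R]

/-- The arcs `u → v` that have weight at least `β` at some time in the window `[t, t + L)`. As in
the column stochastic convention, the arc `u → v` at time `k` has weight `W k v u`. -/
def WindowArc (W : ℕ → Matrix ι ι R) (β : R) (L t : ℕ) (u v : ι) : Prop :=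
  ∃ k ∈ Ico t (t + L), β ≤ W k v u

/-- Uniform strong connectivity of the arcs of weight at least `β`, with window length `L`.
Paths of length zero are allowed. -/
def IsUniformlyStronglyConnected (W : ℕ → Matrix ι ι R) (β : R) (L : ℕ) : Prop :=
  ∀ t u v, Relation.ReflTransGen (WindowArc W β L t) u v

/-- A nonnegative solution `y` of `y (t + 1) = W t *ᵥ y t`, for nonnegative weights `W t` whose
diagonal entries are bounded below by the constant `β ≥ 0`. -/
structure IsLazyTrajectory (W : ℕ → Matrix ι ι R) (y : ℕ → ι → R) (β : R) : Prop where
  bound_nonneg : 0 ≤ β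
  weight_nonneg : ∀ t i j, 0 ≤ W t i j
  le_diag : ∀ t i, β ≤ W t i i
  nonneg : ∀ t i, 0 ≤ y t i
  succ : ∀ t, y (t + 1) = W t *ᵥ y t

namespace IsLazyTrajectory

variable {W : ℕ → Matrix ι ι R} {y : ℕ → ι → R} {β : R} {L t : ℕ}

theorem mul_le_succ (h : IsLazyTrajectory W y β) {u v : ι} (huv : β ≤ W t v u) :
    β * y t u ≤ y (t + 1) v := by
  rw [h.succ]
  exact mul_le_mulVec_apply (h.weight_nonneg t v) (h.nonneg t) huv

theorem pow_mul_le_add (h : IsLazyTrajectory W y β) (t s : ℕ) (i : ι) :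
    β ^ s * y t i ≤ y (t + s) i := by
  induction s with
  | zero => simp
  | succ s ih =>
    calc β ^ (s + 1) * y t i = β * (β ^ s * y t i) := by ring
      _ ≤ β * y (t + s) i := mul_le_mul_of_nonneg_left ih h.bound_nonneg
      _ ≤ y (t + (s + 1)) i := h.mul_le_succ (h.le_diag (t + s) i)

theorem pow_mul_le_add_of_windowArc (h : IsLazyTrajectory W y β) {u v : ι}
    (huv : WindowArc W β L t u v) : β ^ L * y t u ≤ y (t + L) v := by
  have hβ := h.bound_nonneg
  obtain ⟨k, hk, hweight⟩ := huv
  obtain ⟨htk, hkL⟩ := mem_Ico.mp hk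
  obtain ⟨a, rfl⟩ := Nat.exists_eq_add_of_le htk
  obtain ⟨b, rfl⟩ := Nat.exists_eq_add_of_le (show a + 1 ≤ L by lia)
  calc β ^ (a + 1 + b) * y t u = β ^ b * (β * (β ^ a * y t u)) := by ring
    _ ≤ β ^ b * (β * y (t + a) u) := by gcongr; exact h.pow_mul_le_add t a u
    _ ≤ β ^ b * y (t + a + 1) v := by gcongr; exact h.mul_le_succ hweight
    _ ≤ y (t + a + 1 + b) v := h.pow_mul_le_add (t + a + 1) b v
    _ = y (t + (a + 1 + b)) v := by simp only [add_assoc]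

end IsLazyTrajectory

end OrderedCommSemiring

section LinearOrder

variable {ι R : Type*} [Fintype ι] [LinearOrder R]

/-- The indices at which the vector `x` is at least `c`. -/
def superlevel (x : ι → R) (c : R) : Finset ι := {i | c ≤ x i}

theorem mem_superlevel {x : ι → R} {c : R} {i : ι} : i ∈ superlevel x c ↔ c ≤ x i := by
  simp [superlevel]

variable [CommSemiring R]

namespace IsLazyTrajectory

variable [IsOrderedRing R] {W : ℕ → Matrix ι ι R} {y : ℕ → ι → R} {β c : R} {L t : ℕ}

theorem superlevel_subset (h : IsLazyTrajectory W y β) :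
    superlevel (y t) c ⊆ superlevel (y (t + L)) (β ^ L * c) := fun i hi =>
  mem_superlevel.mpr <|
    (mul_le_mul_of_nonneg_left (mem_superlevel.mp hi) (pow_nonneg h.bound_nonneg L)).trans
      (h.pow_mul_le_add t L i)

theorem superlevel_ssubset (h : IsLazyTrajectory W y β)
    (hconn : IsUniformlyStronglyConnected W β L) (hne : (superlevel (y t) c).Nonempty)
    (huniv : superlevel (y t) c ≠ univ) :
    superlevel (y t) c ⊂ superlevel (y (t + L)) (β ^ L * c) := by
  obtain ⟨a, ha⟩ := hne
  obtain ⟨b, hb⟩ : ∃ b, b ∉ superlevel (y t) c := by simpa [eq_univ_iff_forall] using huniv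
  obtain ⟨u, hu, v, hv, huv⟩ := exists_rel_mem_notMem_of_reflTransGen (hconn t a b)
    (mem_coe.mpr ha) (mt mem_coe.mp hb)
  refine (ssubset_iff_of_subset h.superlevel_subset).mpr ⟨v, mem_superlevel.mpr ?_, hv⟩
  calc β ^ L * c ≤ β ^ L * y t u :=
        mul_le_mul_of_nonneg_left (mem_superlevel.mp hu) (pow_nonneg h.bound_nonneg L)
    _ ≤ y (t + L) v := h.pow_mul_le_add_of_windowArc huv

theorem min_le_card_superlevel (h : IsLazyTrajectory W y β)
    (hconn : IsUniformlyStronglyConnected W β L) (hne : (superlevel (y t) c).Nonempty) (m : ℕ) :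
    min (m + 1) (Fintype.card ι) ≤ #(superlevel (y (t + m * L)) (β ^ (m * L) * c)) := by
  induction m with
  | zero => simpa using Or.inl hne
  | succ m ih =>
    have htime : t + (m + 1) * L = t + m * L + L := by ring
    have hlevel : β ^ ((m + 1) * L) * c = β ^ L * (β ^ (m * L) * c) := by ring
    rw [htime, hlevel]
    by_cases huniv : superlevel (y (t + m * L)) (β ^ (m * L) * c) = univ
    · have hsub := h.superlevel_subset (t := t + m * L) (c := β ^ (m * L) * c) (L := L)
      rw [huniv, univ_subset_iff] at hsub
      simp [hsub]
    · have hlt := card_lt_card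
        (h.superlevel_ssubset hconn (hne.mono h.superlevel_subset) huniv)
      lia

theorem pow_mul_le_add_of_exists (h : IsLazyTrajectory W y β)
    (hconn : IsUniformlyStronglyConnected W β L) (hc : ∃ i, c ≤ y t i) (i : ι) :
    β ^ ((Fintype.card ι - 1) * L) * c ≤ y (t + (Fintype.card ι - 1) * L) i := by
  obtain ⟨j, hj⟩ := hc
  have hcard := h.min_le_card_superlevel hconn ⟨j, mem_superlevel.mpr hj⟩ (Fintype.card ι - 1)
  have huniv := (card_eq_iff_eq_univ _).mp <| le_antisymm (card_le_univ _) <|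
    (le_min (by lia) le_rfl).trans hcard
  exact mem_superlevel.mp (huniv ▸ mem_univ i)

end IsLazyTrajectory

theorem stmt_9_general [DecidableEq ι] [IsStrictOrderedRing R] {W : ℕ → Matrix ι ι R}
    {y : ℕ → ι → R} {β c : R} {L : ℕ} (hW : ∀ t, W t ∈ Matrix.colStochastic R ι) (hβ : 0 ≤ β)
    (hdiag : ∀ t i, β ≤ W t i i) (hconn : IsUniformlyStronglyConnected W β L)
    (hy : ∀ t, y (t + 1) = W t *ᵥ y t) (hc : 0 ≤ c) (hy0 : ∀ i, c ≤ y 0 i) (t : ℕ) (i : ι) :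
    β ^ ((Fintype.card ι - 1) * L) * c ≤ y t i ∧ y t i ≤ ∑ j, y 0 j := by
  have hnonneg := nonneg_of_forall_mem_colStochastic hW hy fun j => hc.trans (hy0 j)
  have hsum := sum_eq_sum_zero_of_forall_mem_colStochastic hW hy
  have htraj : IsLazyTrajectory W y β :=
    ⟨hβ, fun t _ _ => Matrix.nonneg_of_mem_colStochastic (hW t), hdiag, hnonneg, hy⟩
  refine ⟨?_, (single_le_sum (fun j _ => hnonneg t j) (mem_univ i)).trans_eq (hsum t)⟩
  rcases le_total ((Fintype.card ι - 1) * L) t with hlate | hearly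
  · obtain ⟨s, rfl⟩ := Nat.exists_eq_add_of_le' hlate
    have hmass : ∑ _j : ι, c ≤ ∑ j, y s j := (sum_le_sum fun j _ => hy0 j).trans_eq (hsum s).symm
    obtain ⟨j, -, hj⟩ := exists_le_of_sum_le ⟨i, mem_univ i⟩ hmass
    exact htraj.pow_mul_le_add_of_exists hconn ⟨j, hj⟩ i
  · have hβ1 : β ≤ 1 := (hdiag 0 i).trans (Matrix.le_one_of_mem_colStochastic (hW 0))
    calc β ^ ((Fintype.card ι - 1) * L) * c ≤ β ^ t * y 0 i :=
          mul_le_mul (pow_le_pow_of_le_one hβ hβ1 hearly) (hy0 i) hc (pow_nonneg hβ t)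
      _ ≤ y t i := by simpa only [zero_add] using htraj.pow_mul_le_add 0 t i

end LinearOrder

theorem stmt_9
    (n : ℕ) (hn : 0 < n)
    (W : ℕ → Matrix (Fin n) (Fin n) ℝ)
    (hWnonneg : ∀ t i j, 0 ≤ W t i j)
    (hWcol : ∀ t j, ∑ i, W t i j = 1)
    (hWdiag : ∀ t i, 0 < W t i i)
    (β : ℝ) (hβ : 0 < β)
    (hWβ : ∀ t i j, 0 < W t i j → β ≤ W t i j)
    (L : ℕ) (hL : 0 < L)
    (hUSC : ∀ t : ℕ, ∀ i j : Fin n,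
      Relation.TransGen (fun u v : Fin n => ∃ k ∈ Finset.Ico t (t + L), 0 < W k v u) i j)
    (y : ℕ → Fin n → ℝ)
    (hy0 : ∀ i, y 0 i = 1)
    (hyrec : ∀ t i, y (t + 1) i = ∑ j, W t i j * y t j)
    :
    ∃ η : ℝ, 0 < η ∧ ∀ t i, η ≤ y t i ∧ y t i ≤ (n : ℝ) := by
  have hconn : IsUniformlyStronglyConnected W β L := fun t u v =>
    Relation.ReflTransGen.mono (fun _ _ ⟨k, hk, hpos⟩ => ⟨k, hk, hWβ k _ _ hpos⟩) u v
      (hUSC t u v).to_reflTransGen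
  refine ⟨β ^ ((n - 1) * L), pow_pos hβ _, fun t i => ?_⟩
  simpa [hy0] using stmt_9_general
    (fun t => Matrix.mem_colStochastic_iff_sum.mpr ⟨hWnonneg t, hWcol t⟩) hβ.le
    (fun t i => hWβ t i i (hWdiag t i)) hconn (fun t => funext (hyrec t)) zero_le_one
    (fun i => (hy0 i).ge) t i
end

section
/- Consider the push-sum algorithm x(t+1) = W(t) x(t), y(t+1) = W(t) y(t) with y(0) = 𝟙 and arbitrary x(0) ∈ ℝ^n. If the graph sequence {𝔾(t)} is uniformly strongly connected, then there exist constants C > 0 and μ ∈ [0,1) such that for all i ∈ {1,…,n} and all t ≥ 0: | x_i(t)/y_i(t) − (1/n) Σ_{j=1}^n x_j(0) | ≤ C μ^t; i.e., every ratio x_i(t)/y_i(t) converges to the average of the initial values exponentially fast. -/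
open Filter Finset
open scoped InnerProductSpace

/-!
Let `c` be the ratio of the conserved quantities `∑ x` and `∑ y`. Then `x t - c • y t` is a
trajectory of the same linear system with zero coordinate sum, so it suffices that zero-sum
trajectories decay geometrically in the `ℓ¹` norm and that `y` stays bounded away from zero. Both
follow once the product of any `T` consecutive weight matrices has all its entries above a
fixed `δ > 0`. Since the diagonals are positive, the set of coordinates influenced by a given one
never shrinks, and strong connectivity makes it grow in every window of length `L` until it is
everything; hence `T = n * L` works, with `δ = β ^ T`.
-/

namespace PushSum

variable {ι R E : Type*}

theorem eq_univ_of_monotone_of_stationary [Fintype ι] {S : ℕ → Finset ι} (hS : Monotone S)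
    (hstat : ∀ m, S (m + 1) = S m → S m = univ) : S (Fintype.card ι) = univ := by
  have univ_or_le_card : ∀ m, S m = univ ∨ m ≤ #(S m) := by
    intro m
    induction m with
    | zero => exact .inr (Nat.zero_le _)
    | succ m ih =>
      have hle : S m ⊆ S (m + 1) := hS m.le_succ
      rcases ih with huniv | hcard
      · exact .inl (univ_subset_iff.1 (huniv ▸ hle))
      · by_cases heq : S (m + 1) = S m
        · exact .inl (heq.trans (hstat m heq))
        · exact .inr (hcard.trans_lt (card_lt_card (hle.ssubset_of_ne (Ne.symm heq))))
  exact (univ_or_le_card _).elim id fun h => eq_univ_of_card _ (le_antisymm (card_le_univ _) h)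

theorem exists_le_mul_pow_of_add_le_mul {a : ℕ → ℝ} (ha : ∀ t, 0 ≤ a t) {T : ℕ} (hT : 0 < T)
    {q : ℝ} (hq : q < 1) (hdecay : ∀ t, a (t + T) ≤ q * a t) :
    ∃ C : ℝ, 0 < C ∧ ∃ μ : ℝ, 0 ≤ μ ∧ μ < 1 ∧ ∀ t, a t ≤ C * μ ^ t := by
  obtain ⟨r, hqr, hr₀, hr₁⟩ : ∃ r, q ≤ r ∧ 0 < r ∧ r < 1 :=
    ⟨max q 2⁻¹, le_max_left _ _, by positivity, max_lt hq (by norm_num)⟩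
  obtain ⟨μ, hμ₀, hμ₁, hμT⟩ : ∃ μ : ℝ, 0 < μ ∧ μ < 1 ∧ μ ^ T = r :=
    ⟨r ^ (T : ℝ)⁻¹, by positivity, Real.rpow_lt_one hr₀.le hr₁ (by positivity),
      Real.rpow_inv_natCast_pow hr₀.le hT.ne'⟩
  have hterm : ∀ t, 0 ≤ a t / μ ^ t := fun t => div_nonneg (ha t) (by positivity)
  obtain ⟨C, hC, hinit⟩ : ∃ C : ℝ, 0 < C ∧ ∀ t < T, a t ≤ C * μ ^ t := by
    refine ⟨1 + ∑ t ∈ range T, a t / μ ^ t,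
      add_pos_of_pos_of_nonneg one_pos (sum_nonneg fun t _ => hterm t), fun t ht => ?_⟩
    rw [← div_le_iff₀ (by positivity)]
    linarith [single_le_sum (fun t _ => hterm t) (mem_range.2 ht)]
  refine ⟨C, hC, μ, hμ₀.le, hμ₁, fun t => ?_⟩
  induction t using Nat.strong_induction_on with
  | _ t ih =>
    obtain ht | ht := lt_or_ge t T
    · exact hinit t ht
    · obtain ⟨d, rfl⟩ := Nat.exists_eq_add_of_le' ht
      calc a (d + T) ≤ q * a d := hdecay d
        _ ≤ r * (C * μ ^ d) := mul_le_mul hqr (ih d (by omega)) (ha d) hr₀.le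
        _ = C * μ ^ (d + T) := by rw [pow_add, hμT]; ring

theorem exists_pos_forall_lt_le [Finite ι] [Zero R] [LinearOrder R] [NoMaxOrder R]
    {y : ℕ → ι → R} (hy : ∀ t i, 0 < y t i) (T : ℕ) :
    ∃ m, 0 < m ∧ ∀ t < T, ∀ i, m ≤ y t i := by
  obtain ⟨m, hm⟩ :=
    Finite.exists_ge fun p : Fin T × ι => (⟨y p.1 p.2, hy p.1 p.2⟩ : Set.Ioi (0 : R))
  exact ⟨m, m.2, fun t ht i => hm (⟨t, ht⟩, i)⟩

theorem mul_le_mul_apply_of_pos {κ l : Type*} [Fintype κ] [Semiring R] [LinearOrder R]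
    [IsStrictOrderedRing R] {A : Matrix ι κ R} {B : Matrix κ l R} {a b : R}
    (hA₀ : ∀ i j, 0 ≤ A i j) (hB₀ : ∀ i j, 0 ≤ B i j) (hb : 0 ≤ b)
    (hA : ∀ i j, 0 < A i j → a ≤ A i j) (hB : ∀ i j, 0 < B i j → b ≤ B i j)
    {i : ι} {j : l} (hpos : 0 < (A * B) i j) :
    a * b ≤ (A * B) i j := by
  rw [Matrix.mul_apply] at hpos ⊢
  have hterm : ∀ k ∈ univ, 0 ≤ A i k * B k j := fun k _ => mul_nonneg (hA₀ i k) (hB₀ k j)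
  obtain ⟨k, hk, hkpos⟩ := (sum_pos_iff_of_nonneg hterm).1 hpos
  have hAk : 0 < A i k := (hA₀ i k).lt_of_ne' (left_ne_zero_of_mul hkpos.ne')
  have hBk : 0 < B k j := (hB₀ k j).lt_of_ne' (right_ne_zero_of_mul hkpos.ne')
  calc a * b ≤ A i k * B k j := mul_le_mul (hA i k hAk) (hB k j hBk) hb (hA₀ i k)
    _ ≤ ∑ k, A i k * B k j := single_le_sum hterm hk

/-- Subtracting `δ` from every entry of `A` does not change its action on zero-sum vectors. -/
theorem sum_norm_sum_smul_le_of_sum_eq_zero {κ : Type*} [Fintype ι] [Fintype κ]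
    [SeminormedAddCommGroup E] [NormedSpace ℝ E] {A : Matrix ι κ ℝ} {δ : ℝ}
    (hδ : ∀ i j, δ ≤ A i j) (hcol : ∀ j, ∑ i, A i j = 1) {v : κ → E} (hv : ∑ j, v j = 0) :
    ∑ i, ‖∑ j, A i j • v j‖ ≤ (1 - Fintype.card ι * δ) * ∑ j, ‖v j‖ := by
  have hshift : ∀ i, ∑ j, A i j • v j = ∑ j, (A i j - δ) • v j := fun i => by
    simp only [sub_smul, sum_sub_distrib, ← smul_sum, hv, smul_zero, sub_zero]
  calc ∑ i, ‖∑ j, A i j • v j‖ ≤ ∑ i, ∑ j, (A i j - δ) * ‖v j‖ := by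
        refine sum_le_sum fun i _ => ?_
        rw [hshift]
        refine norm_sum_le_of_le _ fun j _ => ?_
        rw [norm_smul, Real.norm_of_nonneg (sub_nonneg.2 (hδ i j))]
    _ = (1 - Fintype.card ι * δ) * ∑ j, ‖v j‖ := by
        rw [sum_comm, mul_sum]
        refine sum_congr rfl fun j _ => ?_
        rw [← sum_mul, sum_sub_distrib, hcol, sum_const, card_univ, nsmul_eq_mul]

variable [Fintype ι]

section Transition

variable [DecidableEq ι]

/-- The state transition matrix `W (s + k - 1) * ⋯ * W s` over the `k` steps following time `s`. -/
def transition [Semiring R] (W : ℕ → Matrix ι ι R) (s : ℕ) : ℕ → Matrix ι ι R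
  | 0 => 1
  | k + 1 => W (s + k) * transition W s k

theorem transition_mem_colStochastic [Semiring R] [PartialOrder R] [IsOrderedRing R]
    {W : ℕ → Matrix ι ι R} (hW : ∀ t, W t ∈ Matrix.colStochastic R ι) (s k : ℕ) :
    transition W s k ∈ Matrix.colStochastic R ι := by
  induction k with
  | zero => exact one_mem _
  | succ k ih => exact mul_mem (hW _) ih

theorem transition_nonneg [Semiring R] [PartialOrder R] [IsOrderedRing R]
    {W : ℕ → Matrix ι ι R} (hW : ∀ t i j, 0 ≤ W t i j) (s k : ℕ) (i j : ι) :
    0 ≤ transition W s k i j := by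
  induction k generalizing i with
  | zero => exact Matrix.zero_le_one_elem i j
  | succ k ih => exact sum_nonneg fun l _ => mul_nonneg (hW _ i l) (ih l)

open Classical in
/-- The coordinates whose value at time `s + k` depends on coordinate `j` at time `s`. -/
noncomputable def influenced [Semiring R] [LT R] (W : ℕ → Matrix ι ι R) (s : ℕ) (j : ι) (k : ℕ) :
    Finset ι :=
  {i | 0 < transition W s k i j}

theorem mem_influenced [Semiring R] [LT R] {W : ℕ → Matrix ι ι R} {s k : ℕ} {i j : ι} :
    i ∈ influenced W s j k ↔ 0 < transition W s k i j := by
  simp [influenced]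

variable [Semiring R] [LinearOrder R] [IsStrictOrderedRing R] {W : ℕ → Matrix ι ι R}

theorem pow_le_transition_of_pos (hW : ∀ t i j, 0 ≤ W t i j) {β : R} (hβ : 0 ≤ β)
    (hWβ : ∀ t i j, 0 < W t i j → β ≤ W t i j) (s k : ℕ) (i j : ι)
    (hpos : 0 < transition W s k i j) : β ^ k ≤ transition W s k i j := by
  induction k generalizing i j with
  | zero =>
    obtain rfl : i = j := by
      by_contra hij
      exact hpos.ne' (Matrix.one_apply_ne hij)
    simp [transition]
  | succ k ih =>
    rw [pow_succ']
    exact mul_le_mul_apply_of_pos (hW _) (transition_nonneg hW s k) (pow_nonneg hβ k) (hWβ _) ih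
      hpos

theorem transition_succ_pos (hW : ∀ t i j, 0 ≤ W t i j) {s k : ℕ} {j u v : ι}
    (hu : 0 < transition W s k u j) (harc : 0 < W (s + k) v u) :
    0 < transition W s (k + 1) v j :=
  sum_pos' (fun l _ => mul_nonneg (hW _ v l) (transition_nonneg hW s k l j))
    ⟨u, mem_univ u, mul_pos harc hu⟩

theorem influenced_mono (hW : ∀ t i j, 0 ≤ W t i j) (hdiag : ∀ t i, 0 < W t i i) (s : ℕ) (j : ι) :
    Monotone (influenced W s j) := by
  refine monotone_nat_of_le_succ fun k i hi => ?_
  rw [mem_influenced] at hi ⊢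
  exact transition_succ_pos hW hi (hdiag _ i)

theorem self_mem_influenced (hW : ∀ t i j, 0 ≤ W t i j) (hdiag : ∀ t i, 0 < W t i i) (s k : ℕ)
    (j : ι) : j ∈ influenced W s j k :=
  influenced_mono hW hdiag s j k.zero_le (by simp [mem_influenced, transition])

end Transition

section Connectivity

/-- The arc relation of the union of the graphs of `W t, …, W (t + L - 1)`, where the graph of a
matrix `A` has an arc from `u` to `v` when `0 < A v u`. -/
def UnionArc [Zero R] [LT R] (W : ℕ → Matrix ι ι R) (t L : ℕ) (u v : ι) : Prop :=
  ∃ k ∈ Ico t (t + L), 0 < W k v u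

/-- Uniform strong connectivity of the sequence of graphs of the `W t`: for some `L > 0`, the union
of any `L` consecutive graphs is strongly connected. -/
def UniformlyStronglyConnected [Zero R] [LT R] (W : ℕ → Matrix ι ι R) : Prop :=
  ∃ L, 0 < L ∧ ∀ t i j, Relation.ReflTransGen (UnionArc W t L) i j

variable [DecidableEq ι] [Semiring R] [LinearOrder R] [IsStrictOrderedRing R]
  {W : ℕ → Matrix ι ι R}

theorem influenced_eq_univ_of_stationary (hW : ∀ t i j, 0 ≤ W t i j)
    (hdiag : ∀ t i, 0 < W t i i) {s k L : ℕ} {j : ι}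
    (hconn : ∀ i, Relation.ReflTransGen (UnionArc W (s + k) L) j i)
    (hstat : influenced W s j (k + L) = influenced W s j k) : influenced W s j k = univ := by
  have hmono := influenced_mono hW hdiag s j
  refine eq_univ_of_forall fun i => ?_
  induction hconn i with
  | refl => exact self_mem_influenced hW hdiag s k j
  | @tail u v _ harc hu =>
    obtain ⟨t, ht, hpos⟩ := harc
    rw [mem_Ico] at ht
    obtain ⟨d, rfl⟩ := Nat.exists_eq_add_of_le (show s ≤ t by omega)
    have hud : u ∈ influenced W s j d := hmono (by omega) hu
    have hvd : v ∈ influenced W s j (d + 1) :=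
      mem_influenced.2 (transition_succ_pos hW (mem_influenced.1 hud) hpos)
    exact hstat ▸ hmono (by omega) hvd

theorem transition_card_mul_pos (hW : ∀ t i j, 0 ≤ W t i j) (hdiag : ∀ t i, 0 < W t i i) {L : ℕ}
    (hconn : ∀ t i j, Relation.ReflTransGen (UnionArc W t L) i j) (s : ℕ) (i j : ι) :
    0 < transition W s (Fintype.card ι * L) i j := by
  have hmono : Monotone fun m => influenced W s j (m * L) :=
    (influenced_mono hW hdiag s j).comp fun _ _ h => Nat.mul_le_mul_right L h
  have huniv : influenced W s j (Fintype.card ι * L) = univ :=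
    eq_univ_of_monotone_of_stationary hmono fun m hm =>
      influenced_eq_univ_of_stationary hW hdiag (hconn _ j) (by rwa [← Nat.succ_mul])
  exact mem_influenced.1 (huniv ▸ mem_univ i)

theorem UniformlyStronglyConnected.exists_le_transition [Nonempty ι]
    (hconn : UniformlyStronglyConnected W) (hW : ∀ t i j, 0 ≤ W t i j)
    (hdiag : ∀ t i, 0 < W t i i) {β : R} (hβ : 0 < β) (hWβ : ∀ t i j, 0 < W t i j → β ≤ W t i j) :
    ∃ T, 0 < T ∧ ∃ δ : R, 0 < δ ∧ ∀ s i j, δ ≤ transition W s T i j := by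
  obtain ⟨L, hL, hconn⟩ := hconn
  exact ⟨Fintype.card ι * L, Nat.mul_pos Fintype.card_pos hL, β ^ (Fintype.card ι * L),
    pow_pos hβ _, fun s i j =>
      pow_le_transition_of_pos hW hβ.le hWβ s _ i j (transition_card_mul_pos hW hdiag hconn s i j)⟩

end Connectivity

section Trajectory

/-- `z` is a trajectory of the linear system `z (t + 1) = W t z t`; its coordinates may be vectors,
so that both sequences of the push-sum algorithm are covered. -/
def IsTrajectory [Semiring R] [AddCommMonoid E] [Module R E] (W : ℕ → Matrix ι ι R)
    (z : ℕ → ι → E) : Prop :=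
  ∀ t i, z (t + 1) i = ∑ j, W t i j • z t j

namespace IsTrajectory

theorem sub [Ring R] [AddCommGroup E] [Module R E] {W : ℕ → Matrix ι ι R} {z z' : ℕ → ι → E}
    (hz : IsTrajectory W z) (hz' : IsTrajectory W z') :
    IsTrajectory W fun t i => z t i - z' t i := fun t i => by
  simp only [hz t i, hz' t i, smul_sub, sum_sub_distrib]

variable [Semiring R] [AddCommMonoid E] [Module R E] {W : ℕ → Matrix ι ι R} {z : ℕ → ι → E}

theorem smul_const {y : ℕ → ι → R} (hy : IsTrajectory W y) (c : E) :
    IsTrajectory W fun t i => y t i • c := fun t i => by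
  simp only [hy t i, sum_smul, smul_assoc]

theorem sum_eq (hz : IsTrajectory W z) (hcol : ∀ t j, ∑ i, W t i j = 1) (t : ℕ) :
    ∑ i, z t i = ∑ i, z 0 i := by
  induction t with
  | zero => rfl
  | succ t ih =>
    simp only [hz t]
    rw [sum_comm]
    simp only [← sum_smul, hcol, one_smul, ih]

theorem eq_sum_transition_smul [DecidableEq ι] (hz : IsTrajectory W z) (s k : ℕ) (i : ι) :
    z (s + k) i = ∑ j, transition W s k i j • z s j := by
  induction k generalizing i with
  | zero => simp [transition, Matrix.one_apply]
  | succ k ih =>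
    rw [← add_assoc, hz]
    simp only [transition, Matrix.mul_apply, ih, smul_sum, sum_smul, mul_smul]
    exact sum_comm

end IsTrajectory

theorem IsTrajectory.pos [Semiring R] [PartialOrder R] [IsStrictOrderedRing R]
    {W : ℕ → Matrix ι ι R} {y : ℕ → ι → R} (hy : IsTrajectory W y) (hW : ∀ t i j, 0 ≤ W t i j)
    (hdiag : ∀ t i, 0 < W t i i) (hy₀ : ∀ i, 0 < y 0 i) (t : ℕ) (i : ι) : 0 < y t i := by
  induction t generalizing i with
  | zero => exact hy₀ i
  | succ t ih =>
    rw [hy]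
    exact sum_pos' (fun j _ => mul_nonneg (hW t i j) (ih j).le)
      ⟨i, mem_univ i, mul_pos (hdiag t i) (ih i)⟩

variable [DecidableEq ι] [Nonempty ι]

theorem IsTrajectory.exists_pos_le [Semiring R] [LinearOrder R] [IsStrictOrderedRing R]
    {W : ℕ → Matrix ι ι R} {T : ℕ} {δ : R} {y : ℕ → ι → R} (hy : IsTrajectory W y)
    (hcol : ∀ t j, ∑ i, W t i j = 1) (hpos : ∀ t i, 0 < y t i) (hδ : 0 < δ)
    (hmix : ∀ s i j, δ ≤ transition W s T i j) : ∃ m, 0 < m ∧ ∀ t i, m ≤ y t i := by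
  obtain ⟨m, hm, hinit⟩ := exists_pos_forall_lt_le hpos T
  have hsum : 0 < ∑ j, y 0 j := sum_pos (fun j _ => hpos 0 j) univ_nonempty
  refine ⟨min m (δ * ∑ j, y 0 j), lt_min hm (mul_pos hδ hsum), fun t i => ?_⟩
  obtain ht | ht := lt_or_ge t T
  · exact (min_le_left _ _).trans (hinit t ht i)
  · obtain ⟨d, rfl⟩ := Nat.exists_eq_add_of_le' ht
    calc min m (δ * ∑ j, y 0 j) ≤ δ * ∑ j, y 0 j := min_le_right _ _
      _ = ∑ j, δ * y d j := by rw [← hy.sum_eq hcol d, mul_sum]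
      _ ≤ ∑ j, transition W d T i j • y d j :=
          sum_le_sum fun j _ => mul_le_mul_of_nonneg_right (hmix d i j) (hpos d j).le
      _ = y (d + T) i := (hy.eq_sum_transition_smul d T i).symm

theorem IsTrajectory.exists_sum_norm_le_mul_pow [SeminormedAddCommGroup E] [NormedSpace ℝ E]
    {W : ℕ → Matrix ι ι ℝ} {T : ℕ} {δ : ℝ} {z : ℕ → ι → E} (hz : IsTrajectory W z)
    (hW : ∀ t, W t ∈ Matrix.colStochastic ℝ ι) (hz₀ : ∑ j, z 0 j = 0) (hT : 0 < T) (hδ : 0 < δ)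
    (hmix : ∀ s i j, δ ≤ transition W s T i j) :
    ∃ C : ℝ, 0 < C ∧ ∃ μ : ℝ, 0 ≤ μ ∧ μ < 1 ∧ ∀ t, ∑ i, ‖z t i‖ ≤ C * μ ^ t := by
  have hzero : ∀ t, ∑ j, z t j = 0 := fun t =>
    (hz.sum_eq (fun t => Matrix.sum_col_of_mem_colStochastic (hW t)) t).trans hz₀
  have hrate : 1 - Fintype.card ι * δ < 1 := sub_lt_self 1 (by positivity)
  refine exists_le_mul_pow_of_add_le_mul (fun t => by positivity) hT hrate fun t => ?_
  simp only [hz.eq_sum_transition_smul t T]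
  exact sum_norm_sum_smul_le_of_sum_eq_zero (hmix t)
    (Matrix.sum_col_of_mem_colStochastic (transition_mem_colStochastic hW t T)) (hzero t)

end Trajectory

end PushSum

theorem stmt_14_general {ι E : Type*} [Fintype ι] [DecidableEq ι] [Nonempty ι]
    [SeminormedAddCommGroup E] [NormedSpace ℝ E] {W : ℕ → Matrix ι ι ℝ}
    (hW : ∀ t, W t ∈ Matrix.colStochastic ℝ ι) (hdiag : ∀ t i, 0 < W t i i)
    {β : ℝ} (hβ : 0 < β) (hWβ : ∀ t i j, 0 < W t i j → β ≤ W t i j)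
    (hconn : PushSum.UniformlyStronglyConnected W)
    {y : ℕ → ι → ℝ} (hy : PushSum.IsTrajectory W y) (hy₀ : ∀ i, 0 < y 0 i)
    {x : ℕ → ι → E} (hx : PushSum.IsTrajectory W x) :
    ∃ C : ℝ, 0 < C ∧ ∃ μ : ℝ, 0 ≤ μ ∧ μ < 1 ∧
      ∀ t i, ‖(y t i)⁻¹ • x t i - (∑ j, y 0 j)⁻¹ • ∑ j, x 0 j‖ ≤ C * μ ^ t := by
  have hcol : ∀ t j, ∑ i, W t i j = 1 := fun t => Matrix.sum_col_of_mem_colStochastic (hW t)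
  have hpos : ∀ t i, 0 < y t i := hy.pos (fun t => (hW t).1) hdiag hy₀
  obtain ⟨T, hT, δ, hδ, hmix⟩ := hconn.exists_le_transition (fun t => (hW t).1) hdiag hβ hWβ
  obtain ⟨m, hm, hmy⟩ := hy.exists_pos_le hcol hpos hδ hmix
  set c : E := (∑ j, y 0 j)⁻¹ • ∑ j, x 0 j with hc
  have hsum : ∑ j, y 0 j ≠ 0 := (sum_pos (fun j _ => hy₀ j) univ_nonempty).ne'
  have hzero : ∑ j, (x 0 j - y 0 j • c) = 0 := by
    rw [sum_sub_distrib, ← sum_smul, hc, smul_inv_smul₀ hsum, sub_self]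
  obtain ⟨C, hC, μ, hμ₀, hμ₁, hdecay⟩ :=
    (hx.sub (hy.smul_const c)).exists_sum_norm_le_mul_pow hW hzero hT hδ hmix
  refine ⟨m⁻¹ * C, by positivity, μ, hμ₀, hμ₁, fun t i => ?_⟩
  calc ‖(y t i)⁻¹ • x t i - c‖ = (y t i)⁻¹ * ‖x t i - y t i • c‖ := by
        rw [← norm_smul_of_nonneg (inv_nonneg.2 (hpos t i).le), smul_sub,
          inv_smul_smul₀ (hpos t i).ne']
    _ ≤ m⁻¹ * (C * μ ^ t) := by
        gcongr
        · exact hmy t i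
        · exact (single_le_sum (f := fun i => ‖x t i - y t i • c‖) (fun _ _ => norm_nonneg _)
            (mem_univ i)).trans (hdecay t)
    _ = m⁻¹ * C * μ ^ t := (mul_assoc _ _ _).symm

theorem stmt_14
    (n : ℕ) (hn : 0 < n)
    (W : ℕ → Matrix (Fin n) (Fin n) ℝ)
    (hWnonneg : ∀ t i j, 0 ≤ W t i j)
    (hWcol : ∀ t j, ∑ i, W t i j = 1)
    (hWdiag : ∀ t i, 0 < W t i i)
    (β : ℝ) (hβ : 0 < β)
    (hWβ : ∀ t i j, 0 < W t i j → β ≤ W t i j)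
    (L : ℕ) (hL : 0 < L)
    (hUSC : ∀ t : ℕ, ∀ i j : Fin n,
      Relation.TransGen (fun u v : Fin n => ∃ k ∈ Finset.Ico t (t + L), 0 < W k v u) i j)
    (y : ℕ → Fin n → ℝ)
    (hy0 : ∀ i, y 0 i = 1)
    (hyrec : ∀ t i, y (t + 1) i = ∑ j, W t i j * y t j)
    (x : ℕ → Fin n → ℝ)
    (hxrec : ∀ t i, x (t + 1) i = ∑ j, W t i j * x t j)
    :
    ∃ C : ℝ, 0 < C ∧ ∃ μ : ℝ, 0 ≤ μ ∧ μ < 1 ∧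
      ∀ t : ℕ, ∀ i : Fin n,
        |x t i / y t i - (∑ j, x 0 j) / n| ≤ C * μ ^ t := by
  have : Nonempty (Fin n) := ⟨⟨0, hn⟩⟩
  have hW : ∀ t, W t ∈ Matrix.colStochastic ℝ (Fin n) := fun t =>
    Matrix.mem_colStochastic_iff_sum.2 ⟨hWnonneg t, hWcol t⟩
  simpa [hy0, div_eq_inv_mul] using stmt_14_general hW hWdiag hβ hWβ
    ⟨L, hL, fun t i j => (hUSC t i j).to_reflTransGen⟩ hyrec (by simp [hy0]) hxrec
end
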